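/- arXiv:1711.02916 — 2 statements merged into one kernel-verified Lean document; each statement's English description precedes it below -/
import Mathlib

section
/- There exist μ > 0 and n₀ ∈ ℕ such that for every n ≥ n₀ and every even integer Δ with 1 ≤ Δ ≤ μn the following holds: if G is a graph on n vertices with minimum degree at least n/2, then for every (μn/Δ)-bounded edge colouring χ of G there exists a spanning Δ-regular subgraph of G that is rainbow with respect to χ. -/
section helpers
open Finset
open scoped Classical

/-- Lopsided Lovász local lemma, symmetric counting version. -/
theorem lopsided_lll {Ω I : Type*} [Fintype I] (Ω0 : Finset Ω) (hΩ : Ω0.Nonempty)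
    (A : I → Finset Ω) (nb : I → Finset I) (q d : ℝ) (hq : 4 * d ≤ q) (hq2 : 2 < q)
    (hd : ∀ i, ((nb i).card : ℝ) ≤ d)
    (h : ∀ i (S : Finset I), (∀ j ∈ S, j ∉ nb i) →
      ((Ω0.filter fun ω => ω ∈ A i ∧ ∀ j ∈ S, ω ∉ A j).card : ℝ) * q ≤
        ((Ω0.filter fun ω => ∀ j ∈ S, ω ∉ A j).card : ℝ)) :
    ∃ ω ∈ Ω0, ∀ i, ω ∉ A i := by
  have key : ∀ m : ℕ, ∀ S : Finset I, S.card = m → ∀ i,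
      ((Ω0.filter fun ω => ω ∈ A i ∧ ∀ j ∈ S, ω ∉ A j).card : ℝ) * q ≤
        2 * ((Ω0.filter fun ω => ∀ j ∈ S, ω ∉ A j).card : ℝ) := by
    intro m
    induction m using Nat.strong_induction_on with
    | _ m ih =>
      intro S hS i
      by_cases hS1 : ∀ j ∈ S, j ∉ nb i
      · have := h i S hS1
        have h0 : (0:ℝ) ≤ ((Ω0.filter fun ω => ∀ j ∈ S, ω ∉ A j).card : ℝ) := by positivity
        linarith
      · push Not at hS1
        obtain ⟨j0, hj0, hj0'⟩ := hS1
        set S2 := S.filter (fun j => j ∉ nb i) with hS2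
        set S1 := S.filter (fun j => j ∈ nb i) with hS1d
        have hlt : S2.card < m := by
          rw [← hS]
          apply Finset.card_lt_card
          refine Finset.filter_ssubset.2 ⟨j0, hj0, by simpa using hj0'⟩
        have e1 := h i S2 (by intro j hj; exact (Finset.mem_filter.1 hj).2)
        have e2 : ((Ω0.filter fun ω => ω ∈ A i ∧ ∀ j ∈ S, ω ∉ A j).card : ℝ) ≤
            ((Ω0.filter fun ω => ω ∈ A i ∧ ∀ j ∈ S2, ω ∉ A j).card : ℝ) := by
          exact_mod_cast Finset.card_le_card (by
            intro ω; simp only [Finset.mem_filter]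
            rintro ⟨h0, h1, h2⟩
            exact ⟨h0, h1, fun j hj => h2 j (Finset.mem_filter.1 hj).1⟩)
        have e3 : ((Ω0.filter fun ω => ∀ j ∈ S2, ω ∉ A j).card : ℝ) ≤
            ((Ω0.filter fun ω => ∀ j ∈ S, ω ∉ A j).card : ℝ) +
            ∑ j ∈ S1, ((Ω0.filter fun ω => ω ∈ A j ∧ ∀ j ∈ S2, ω ∉ A j).card : ℝ) := by
          have hsub : (Ω0.filter fun ω => ∀ j ∈ S2, ω ∉ A j) ⊆
              (Ω0.filter fun ω => ∀ j ∈ S, ω ∉ A j) ∪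
              S1.biUnion (fun j => Ω0.filter fun ω => ω ∈ A j ∧ ∀ j ∈ S2, ω ∉ A j) := by
            intro ω hω
            simp only [Finset.mem_filter, Finset.mem_union,
              Finset.mem_biUnion] at hω ⊢
            by_cases hc : ∀ j ∈ S, ω ∉ A j
            · exact Or.inl ⟨hω.1, hc⟩
            · push Not at hc
              obtain ⟨j, hj, hj2⟩ := hc
              right
              refine ⟨j, ?_, hω.1, hj2, hω.2⟩
              by_contra hcon
              exact hω.2 j (by simp only [hS2, Finset.mem_filter]; refine ⟨hj, fun hh => hcon ?_⟩; simp [hS1d, hj, hh]) hj2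
          have := (Finset.card_le_card hsub).trans ((Finset.card_union_le _ _).trans
            (Nat.add_le_add_left Finset.card_biUnion_le _))
          exact_mod_cast this
        have hS1c : (S1.card : ℝ) ≤ d := by
          refine le_trans ?_ (hd i)
          exact_mod_cast Finset.card_le_card (by intro j hj; exact (Finset.mem_filter.1 hj).2)
        set a := ((Ω0.filter fun ω => ∀ j ∈ S2, ω ∉ A j).card : ℝ) with ha
        have ha0 : 0 ≤ a := by positivity
        have e4 : (∑ j ∈ S1, ((Ω0.filter fun ω => ω ∈ A j ∧ ∀ j ∈ S2, ω ∉ A j).card : ℝ)) * q ≤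
            S1.card * (2 * a) := by
          rw [Finset.sum_mul]
          have := Finset.sum_le_card_nsmul S1
            (fun j => ((Ω0.filter fun ω => ω ∈ A j ∧ ∀ j ∈ S2, ω ∉ A j).card : ℝ) * q) (2 * a)
            (fun j _ => ih _ hlt S2 rfl j)
          simpa using this
        set s := (∑ j ∈ S1, ((Ω0.filter fun ω => ω ∈ A j ∧ ∀ j ∈ S2, ω ∉ A j).card : ℝ))
        have e5 : s * q ≤ a / 2 * q := by
          have : (S1.card : ℝ) * (2 * a) ≤ d * (2 * a) := by gcongr
          nlinarith
        have e6 : s ≤ a / 2 := le_of_mul_le_mul_right e5 (by linarith)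
        have e7 : ((Ω0.filter fun ω => ω ∈ A i ∧ ∀ j ∈ S, ω ∉ A j).card : ℝ) * q ≤
            ((Ω0.filter fun ω => ω ∈ A i ∧ ∀ j ∈ S2, ω ∉ A j).card : ℝ) * q :=
          mul_le_mul_of_nonneg_right e2 (by linarith)
        linarith
  have pos : ∀ S : Finset I, (0:ℝ) < ((Ω0.filter fun ω => ∀ j ∈ S, ω ∉ A j).card : ℝ) := by
    intro S
    induction S using Finset.induction_on with
    | empty => simpa using hΩ
    | insert i S hi ih =>
      have h1 := key _ S rfl i
      have h2 : ((Ω0.filter fun ω => ∀ j ∈ S, ω ∉ A j).card : ℝ) ≤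
          ((Ω0.filter fun ω => ∀ j ∈ insert i S, ω ∉ A j).card : ℝ) +
          ((Ω0.filter fun ω => ω ∈ A i ∧ ∀ j ∈ S, ω ∉ A j).card : ℝ) := by
        have hsub : (Ω0.filter fun ω => ∀ j ∈ S, ω ∉ A j) ⊆
            (Ω0.filter fun ω => ∀ j ∈ insert i S, ω ∉ A j) ∪
            (Ω0.filter fun ω => ω ∈ A i ∧ ∀ j ∈ S, ω ∉ A j) := by
          intro ω hω
          simp only [Finset.mem_filter, Finset.mem_union,
            Finset.mem_insert, forall_eq_or_imp] at hω ⊢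
          tauto
        exact_mod_cast (Finset.card_le_card hsub).trans (Finset.card_union_le _ _)
      by_contra hcon
      have h0 : ((Ω0.filter fun ω => ∀ j ∈ insert i S, ω ∉ A j).card : ℝ) ≤ 0 := not_lt.1 hcon
      have : ((Ω0.filter fun ω => ∀ j ∈ S, ω ∉ A j).card : ℝ) * q ≤
        ((Ω0.filter fun ω => ω ∈ A i ∧ ∀ j ∈ S, ω ∉ A j).card : ℝ) * q :=
        mul_le_mul_of_nonneg_right (by linarith) (by linarith)
      nlinarith
  have := pos univ
  have h3 : 0 < (Ω0.filter fun ω => ∀ j ∈ (univ : Finset I), ω ∉ A j).card := by exact_mod_cast this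
  obtain ⟨ω, hω⟩ := Finset.card_pos.1 h3
  exact ⟨ω, (Finset.mem_filter.1 hω).1, fun i => (Finset.mem_filter.1 hω).2 i (Finset.mem_univ _)⟩

/-- Beck–Fiala rounding. -/
theorem beck_fiala {I J : Type*} [Fintype I] [Fintype J] (w : I → J → ℝ) (hw : ∀ i j, 0 ≤ w i j)
    (D : ℝ) (hD : 0 ≤ D) (hcol : ∀ j, ∑ i, w i j ≤ D) :
    ∀ m : ℕ, ∀ x : J → ℝ, (∀ j, 0 ≤ x j ∧ x j ≤ 1) →
      (univ.filter fun j => x j ≠ 0 ∧ x j ≠ 1).card = m →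
      ∃ y : J → ℝ, (∀ j, y j = 0 ∨ y j = 1) ∧ (∀ j, (x j = 0 ∨ x j = 1) → y j = x j) ∧
        ∀ i, |∑ j, w i j * (x j - y j)| ≤ D := by
  intro m
  induction m using Nat.strong_induction_on with
  | _ m ih =>
    intro x hx hm
    set F := univ.filter fun j => x j ≠ 0 ∧ x j ≠ 1 with hF
    by_cases hF0 : F = ∅
    · refine ⟨x, ?_, fun _ _ => rfl, by intro i; simpa using hD⟩
      intro j
      by_contra hc
      push Not at hc
      have : j ∈ F := by simp [hF, hc]
      simp [hF0] at this
    have hFne : F.Nonempty := Finset.nonempty_iff_ne_empty.2 hF0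
    set Al := univ.filter fun i => D < ∑ j ∈ F, w i j with hAl
    have hcard : Al.card < F.card := by
      by_cases hAl0 : Al.card = 0
      · rw [hAl0]; exact Finset.card_pos.2 hFne
      have hne : Al.Nonempty := Finset.card_pos.1 (Nat.pos_of_ne_zero hAl0)
      have h1 : (Al.card : ℝ) * D < ∑ i ∈ Al, ∑ j ∈ F, w i j := by
        have := Finset.sum_lt_sum_of_nonempty hne (f := fun _ => D) (g := fun i => ∑ j ∈ F, w i j)
          (fun i hi => (Finset.mem_filter.1 hi).2)
        simpa using this
      have h2 : ∑ i ∈ Al, ∑ j ∈ F, w i j ≤ F.card * D := by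
        rw [Finset.sum_comm]
        have := Finset.sum_le_card_nsmul F (fun j => ∑ i ∈ Al, w i j) D (fun j _ =>
          (Finset.sum_le_sum_of_subset_of_nonneg (Finset.subset_univ _) (fun i _ _ => hw i j)).trans (hcol j))
        simpa using this
      have h3 : (Al.card : ℝ) * D < F.card * D := h1.trans_le h2
      have h4 : (Al.card : ℝ) < F.card := lt_of_mul_lt_mul_right h3 hD
      exact_mod_cast h4
    -- kernel vector
    obtain ⟨z, hz0, hz⟩ : ∃ z : F → ℝ, z ≠ 0 ∧ ∀ i ∈ Al, ∑ j : F, w i j * z j = 0 := by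
      let T : (F → ℝ) →ₗ[ℝ] (Al → ℝ) :=
        { toFun := fun z i => ∑ j : F, w i j * z j
          map_add' := by intro a b; ext i; simp [mul_add, Finset.sum_add_distrib]
          map_smul' := by
            intro a b; ext i; simp only [Pi.smul_apply, smul_eq_mul, RingHom.id_apply, Finset.mul_sum]
            exact Finset.sum_congr rfl (fun j _ => by ring) }
      have hk : LinearMap.ker T ≠ ⊥ := by
        apply LinearMap.ker_ne_bot_of_finrank_lt
        simpa using hcard
      obtain ⟨z, hz, hz0⟩ := (Submodule.ne_bot_iff _).1 hk
      refine ⟨z, hz0, fun i hi => ?_⟩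
      have := congrFun (LinearMap.mem_ker.1 hz) ⟨i, hi⟩
      simpa [T] using this
    -- extended vector
    set Z : J → ℝ := fun j => if h : j ∈ F then z ⟨j, h⟩ else 0 with hZ
    have hZoff : ∀ j, j ∉ F → Z j = 0 := by intro j hj; simp [hZ, hj]
    have hZsum : ∀ i ∈ Al, ∑ j, w i j * Z j = 0 := by
      intro i hi
      rw [← hz i hi, ← Finset.sum_subset (Finset.subset_univ F), ← Finset.sum_coe_sort F]
      · exact Finset.sum_congr rfl (fun j _ => by simp [hZ])
      · intro j _ hj; simp [hZoff j hj]
    obtain ⟨j1, hj1⟩ : ∃ j, Z j ≠ 0 := by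
      obtain ⟨j, hj⟩ := Function.ne_iff.1 hz0
      exact ⟨j, by simpa [hZ] using hj⟩
    set τ : J → ℝ := fun j => if 0 < Z j then (1 - x j) / Z j else x j / (- Z j) with hτ
    obtain ⟨j0, hj0, hmin⟩ := Finset.exists_min_image (univ.filter fun j => Z j ≠ 0) τ ⟨j1, by simp [hj1]⟩
    have hZj0 : Z j0 ≠ 0 := by simpa using hj0
    set s := τ j0 with hs
    have hτ0 : ∀ j, Z j ≠ 0 → 0 ≤ τ j := by
      intro j hj
      simp only [hτ]
      split_ifs with h
      · exact div_nonneg (by linarith [(hx j).2]) h.le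
      · exact div_nonneg (hx j).1 (by linarith)
    have hs0 : 0 ≤ s := hτ0 j0 hZj0
    set x' : J → ℝ := fun j => x j + s * Z j with hx'
    have hx'b : ∀ j, 0 ≤ x' j ∧ x' j ≤ 1 := by
      intro j
      simp only [hx']
      by_cases hj : Z j = 0
      · simp [hj, hx j]
      have hle : s ≤ τ j := hmin j (by simp [hj])
      have hτj : τ j = if 0 < Z j then (1 - x j) / Z j else x j / (- Z j) := rfl
      rw [hτj] at hle
      split_ifs at hle with h
      · rw [le_div_iff₀ h] at hle
        constructor
        · have := (hx j).1; positivity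
        · linarith
      · have h' : 0 < - Z j := by
          have := lt_of_le_of_ne (not_lt.1 h) hj
          linarith
        rw [le_div_iff₀ h'] at hle
        have h5 : s * Z j ≤ 0 := mul_nonpos_of_nonneg_of_nonpos hs0 (by linarith)
        constructor
        · linarith
        · linarith [(hx j).2]
    have hx'j0 : x' j0 = 0 ∨ x' j0 = 1 := by
      simp only [hx', hs, hτ]
      split_ifs with h
      · right; field_simp; ring
      · left; field_simp; ring
    have hxoff : ∀ j, j ∉ F → x' j = x j := by intro j hj; simp [hx', hZoff j hj]
    have hsub : (univ.filter fun j => x' j ≠ 0 ∧ x' j ≠ 1) ⊂ F := by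
      rw [Finset.ssubset_iff_of_subset]
      · refine ⟨j0, ?_, ?_⟩
        · by_contra h; exact hZj0 (hZoff j0 h)
        · simp only [Finset.mem_filter, Finset.mem_univ, true_and]; tauto
      · intro j hj
        by_contra h
        have h2 := hxoff j h
        simp only [Finset.mem_filter, Finset.mem_univ, true_and, h2] at hj
        exact h (by simp [hF, hj])
    obtain ⟨y, hy1, hy2, hy3⟩ := ih _ (by rw [← hm]; exact Finset.card_lt_card hsub) x' hx'b rfl
    have hyx : ∀ j, j ∉ F → y j = x j := by
      intro j hj
      have h2 := hxoff j hj
      rw [← h2]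
      apply hy2
      rw [h2]
      by_contra hc; push Not at hc
      exact hj (by simp [hF, hc])
    refine ⟨y, hy1, ?_, ?_⟩
    · intro j hj
      apply hyx
      simp only [hF, Finset.mem_filter, Finset.mem_univ, true_and]; tauto
    · intro i
      by_cases hi : i ∈ Al
      · have : ∑ j, w i j * (x j - y j) = ∑ j, w i j * (x' j - y j) := by
          have h1 : ∑ j, w i j * (x' j - y j) = ∑ j, w i j * (x j - y j) + s * ∑ j, w i j * Z j := by
            rw [Finset.mul_sum, ← Finset.sum_add_distrib]
            exact Finset.sum_congr rfl (fun j _ => by simp only [hx']; ring)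
          rw [h1, hZsum i hi]; ring
        rw [this]; exact hy3 i
      · have hle : ∑ j ∈ F, w i j ≤ D := by
          by_contra h; exact hi (by simp only [hAl, Finset.mem_filter, Finset.mem_univ, true_and]; linarith)
        rw [← Finset.sum_subset (Finset.subset_univ F) (fun j _ hj => by rw [hyx j hj]; simp)]
        refine (Finset.abs_sum_le_sum_abs _ _).trans (le_trans (Finset.sum_le_sum ?_) hle)
        intro j _
        rw [abs_mul, abs_of_nonneg (hw i j)]
        refine mul_le_of_le_one_right (hw i j) ?_
        rw [abs_le]
        have := hx j
        rcases hy1 j with h | h <;> rw [h] <;> constructor <;> linarith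
end helpers

section helpers
open Finset
open scoped Classical

/-- the 4-cycle `a → a1 → a2 → a3 → a`. -/
noncomputable def rot4 {V : Type*} (a a1 a2 a3 : V) : Equiv.Perm V :=
  Equiv.swap a a1 * Equiv.swap a1 a2 * Equiv.swap a2 a3

theorem rot4_spec {V : Type*} {a a1 a2 a3 : V} (h01 : a ≠ a1) (h02 : a ≠ a2) (h03 : a ≠ a3)
    (h12 : a1 ≠ a2) (h13 : a1 ≠ a3) (h23 : a2 ≠ a3) :
    rot4 a a1 a2 a3 a = a1 ∧ rot4 a a1 a2 a3 a1 = a2 ∧ rot4 a a1 a2 a3 a2 = a3 ∧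
    rot4 a a1 a2 a3 a3 = a ∧ ∀ x, x ≠ a → x ≠ a1 → x ≠ a2 → x ≠ a3 → rot4 a a1 a2 a3 x = x := by
  refine ⟨?_, ?_, ?_, ?_, ?_⟩
  · simp only [rot4, Equiv.Perm.mul_apply]
    rw [Equiv.swap_apply_of_ne_of_ne h02 h03, Equiv.swap_apply_of_ne_of_ne h01 h02, Equiv.swap_apply_left]
  · simp only [rot4, Equiv.Perm.mul_apply]
    rw [Equiv.swap_apply_of_ne_of_ne h12 h13, Equiv.swap_apply_left, Equiv.swap_apply_of_ne_of_ne h02.symm h12.symm]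
  · simp only [rot4, Equiv.Perm.mul_apply]
    rw [Equiv.swap_apply_left, Equiv.swap_apply_of_ne_of_ne h13.symm h23.symm,
      Equiv.swap_apply_of_ne_of_ne h03.symm h13.symm]
  · simp only [rot4, Equiv.Perm.mul_apply]
    rw [Equiv.swap_apply_right, Equiv.swap_apply_right, Equiv.swap_apply_right]
  · intro x h0 h1 h2 h3
    simp only [rot4, Equiv.Perm.mul_apply]
    rw [Equiv.swap_apply_of_ne_of_ne h2 h3, Equiv.swap_apply_of_ne_of_ne h1 h2, Equiv.swap_apply_of_ne_of_ne h0 h1]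

/-- triples along which we may switch -/
noncomputable def triples {V : Type*} [Fintype V] (adj : V → V → Prop) (σ : Equiv.Perm V) (a : V) :
    Finset (V × V × V) :=
  univ.filter fun p => adj a (σ p.1) ∧ adj p.1 (σ p.2.1) ∧ adj p.2.1 (σ p.2.2) ∧ adj p.2.2 (σ a)

noncomputable def goodTriples {V : Type*} [Fintype V] (adj : V → V → Prop) (col : V → V → ℕ)
    (σ : Equiv.Perm V) (a : V) (O : Finset V) (U : Finset ℕ) : Finset (V × V × V) :=
  (triples adj σ a).filter fun p =>
    (a ≠ p.1 ∧ a ≠ p.2.1 ∧ a ≠ p.2.2 ∧ p.1 ≠ p.2.1 ∧ p.1 ≠ p.2.2 ∧ p.2.1 ≠ p.2.2) ∧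
    (p.1 ∉ O ∧ p.2.1 ∉ O ∧ p.2.2 ∉ O) ∧
    (col p.1 (σ p.2.1) ∉ U ∧ col p.2.1 (σ p.2.2) ∉ U ∧ col p.1 (σ p.2.1) ≠ col p.2.1 (σ p.2.2))

set_option maxHeartbeats 1000000 in
theorem goodTriples_card {V : Type*} [Fintype V] (adj : V → V → Prop) (col : V → V → ℕ)
    (σ : Equiv.Perm V) (a : V) (O : Finset V) (U : Finset ℕ) (hO : O.card ≤ 1)
    (K c μ : ℝ) (hK0 : K ≤ μ * Fintype.card V)
    (hUK : U.card * K ≤ μ * (Fintype.card V : ℝ) ^ 2)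
    (hK : ∀ cc, ((univ.filter fun p : V × V => adj p.1 p.2 ∧ col p.1 p.2 = cc).card : ℝ) ≤ K)
    (hμ : 12 * μ ≤ c) (hn : 36 ≤ c * Fintype.card V)
    (hR : c * (Fintype.card V : ℝ) ^ 3 ≤ (triples adj σ a).card) :
    c / 2 * (Fintype.card V : ℝ) ^ 3 ≤ (goodTriples adj col σ a O U).card := by
  set n := Fintype.card V with hn'
  set O' := insert a O with hO'
  have hO'c : O'.card ≤ 2 := (Finset.card_insert_le _ _).trans (by omega)
  set W := univ.filter fun p : V × V => adj p.1 p.2 ∧ col p.1 p.2 ∈ U with hW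
  have hWc : (W.card : ℝ) ≤ μ * (n : ℝ) ^ 2 := by
    have : W ⊆ U.biUnion fun cc => univ.filter fun p : V × V => adj p.1 p.2 ∧ col p.1 p.2 = cc := by
      intro p hp
      simp only [hW, Finset.mem_filter, Finset.mem_univ, true_and, Finset.mem_biUnion] at hp ⊢
      exact ⟨_, hp.2, hp.1, rfl⟩
    have h1 : (W.card : ℝ) ≤ ∑ cc ∈ U, ((univ.filter fun p : V × V => adj p.1 p.2 ∧ col p.1 p.2 = cc).card : ℝ) := by
      exact_mod_cast (Finset.card_le_card this).trans Finset.card_biUnion_le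
    have h2 := Finset.sum_le_card_nsmul U _ K (fun cc _ => hK cc)
    rw [nsmul_eq_mul] at h2
    linarith
  set b1 : Finset (V × V × V) := O' ×ˢ (univ ×ˢ univ)
  set b2 : Finset (V × V × V) := univ ×ˢ (O' ×ˢ univ)
  set b3 : Finset (V × V × V) := univ ×ˢ (univ ×ˢ O')
  set b4 : Finset (V × V × V) := (univ : Finset (V × V)).image fun p => (p.1, p.1, p.2)
  set b5 : Finset (V × V × V) := (univ : Finset (V × V)).image fun p => (p.1, p.2, p.1)
  set b6 : Finset (V × V × V) := (univ : Finset (V × V)).image fun p => (p.1, p.2, p.2)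
  set b7 : Finset (V × V × V) := (W ×ˢ (univ : Finset V)).image fun p => (p.1.1, σ.symm p.1.2, p.2)
  set b8 : Finset (V × V × V) := (W ×ˢ (univ : Finset V)).image fun p => (p.2, p.1.1, σ.symm p.1.2)
  set b9 : Finset (V × V × V) := (univ : Finset (V × V)).biUnion fun p =>
    (univ.filter fun q : V × V => adj q.1 q.2 ∧ col q.1 q.2 = col p.1 (σ p.2)).image
      fun q => (p.1, p.2, σ.symm q.2)
  have c1 : b1.card ≤ 2 * n ^ 2 := by
    simp only [b1, Finset.card_product, Finset.card_univ]; nlinarith [Nat.mul_le_mul_right (n*n) hO'c]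
  have c2 : b2.card ≤ 2 * n ^ 2 := by
    simp only [b2, Finset.card_product, Finset.card_univ]; nlinarith [Nat.mul_le_mul_right (n*n) hO'c]
  have c3 : b3.card ≤ 2 * n ^ 2 := by
    simp only [b3, Finset.card_product, Finset.card_univ]; nlinarith [Nat.mul_le_mul_right (n*n) hO'c]
  have c4 : b4.card ≤ n ^ 2 := Finset.card_image_le.trans (by simp [hn', sq])
  have c5 : b5.card ≤ n ^ 2 := Finset.card_image_le.trans (by simp [hn', sq])
  have c6 : b6.card ≤ n ^ 2 := Finset.card_image_le.trans (by simp [hn', sq])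
  have c7' : b7.card ≤ W.card * n := Finset.card_image_le.trans (by simp [hn', Finset.card_product])
  have c8' : b8.card ≤ W.card * n := Finset.card_image_le.trans (by simp [hn', Finset.card_product])
  have c7 : (b7.card : ℝ) ≤ μ * (n:ℝ)^3 := by
    have : (b7.card : ℝ) ≤ W.card * n := by exact_mod_cast c7'
    nlinarith [mul_le_mul_of_nonneg_right hWc (Nat.cast_nonneg (α := ℝ) n)]
  have c8 : (b8.card : ℝ) ≤ μ * (n:ℝ)^3 := by
    have : (b8.card : ℝ) ≤ W.card * n := by exact_mod_cast c8'
    nlinarith [mul_le_mul_of_nonneg_right hWc (Nat.cast_nonneg (α := ℝ) n)]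
  have c9 : (b9.card : ℝ) ≤ μ * (n:ℝ)^3 := by
    have h1 : (b9.card : ℝ) ≤ ∑ p : V × V, ((univ.filter fun q : V × V => adj q.1 q.2 ∧ col q.1 q.2 = col p.1 (σ p.2)).card : ℝ) := by
      exact_mod_cast Finset.card_biUnion_le.trans (Finset.sum_le_sum fun p _ => Finset.card_image_le)
    have h2 := Finset.sum_le_card_nsmul (univ : Finset (V × V)) (fun p => ((univ.filter fun q : V × V => adj q.1 q.2 ∧ col q.1 q.2 = col p.1 (σ p.2)).card : ℝ)) K (fun p _ => hK _)
    rw [nsmul_eq_mul] at h2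
    have h3 : ((univ : Finset (V × V)).card : ℝ) = n ^ 2 := by
      simp [hn', sq]
    rw [h3] at h2
    have h4 : (n:ℝ)^2 * K ≤ n^2 * (μ * n) := by gcongr
    nlinarith
  have hsub : triples adj σ a ⊆ goodTriples adj col σ a O U ∪ (b1 ∪ (b2 ∪ (b3 ∪ (b4 ∪ (b5 ∪ (b6 ∪ (b7 ∪ (b8 ∪ b9)))))))) := by
    rintro ⟨x, y, z⟩ hp
    have hp' := hp
    simp only [triples, Finset.mem_filter, Finset.mem_univ, true_and] at hp'
    by_cases k1 : x ∈ O'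
    · simp [b1, k1]
    by_cases k2 : y ∈ O'
    · simp [b2, k2]
    by_cases k3 : z ∈ O'
    · simp [b3, k3]
    by_cases k4 : x = y
    · simp [b4, k4]
    by_cases k5 : x = z
    · simp [b5, k5]
    by_cases k6 : y = z
    · simp [b6, k6]
    by_cases k7 : col x (σ y) ∈ U
    · have : (x, y, z) ∈ b7 := by
        refine Finset.mem_image.2 ⟨((x, σ y), z), ?_, by simp⟩
        simp [hW, k7, hp']
      simp only [Finset.mem_union, this, true_or, or_true]
    by_cases k8 : col y (σ z) ∈ U
    · have : (x, y, z) ∈ b8 := by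
        refine Finset.mem_image.2 ⟨((y, σ z), x), ?_, by simp⟩
        simp [hW, k8, hp']
      simp only [Finset.mem_union, this, true_or, or_true]
    by_cases k9 : col x (σ y) = col y (σ z)
    · have : (x, y, z) ∈ b9 := by
        refine Finset.mem_biUnion.2 ⟨(x, y), Finset.mem_univ _, Finset.mem_image.2 ⟨(y, σ z), ?_, by simp⟩⟩
        simp [k9, hp']
      simp only [Finset.mem_union, this, true_or, or_true]
    · refine Finset.mem_union_left _ ?_
      simp only [hO', Finset.mem_insert, not_or] at k1 k2 k3
      simp only [goodTriples, Finset.mem_filter]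
      exact ⟨hp, ⟨Ne.symm k1.1, Ne.symm k2.1, Ne.symm k3.1, k4, k5, k6⟩, ⟨k1.2, k2.2, k3.2⟩, k7, k8, k9⟩
  have hcard : (triples adj σ a).card ≤ (goodTriples adj col σ a O U).card + (b1.card + (b2.card + (b3.card +
      (b4.card + (b5.card + (b6.card + (b7.card + (b8.card + b9.card)))))))) := by
    refine (Finset.card_le_card hsub).trans ?_
    iterate 9 refine (Finset.card_union_le _ _).trans (Nat.add_le_add_left ?_ _)
    exact le_rfl
  have hcard' : ((triples adj σ a).card : ℝ) ≤ (goodTriples adj col σ a O U).card + (b1.card + (b2.card + (b3.card +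
      (b4.card + (b5.card + (b6.card + (b7.card + (b8.card + b9.card)))))))) := by exact_mod_cast hcard
  have r1 : (b1.card : ℝ) ≤ 2 * n ^ 2 := by exact_mod_cast c1
  have r2 : (b2.card : ℝ) ≤ 2 * n ^ 2 := by exact_mod_cast c2
  have r3 : (b3.card : ℝ) ≤ 2 * n ^ 2 := by exact_mod_cast c3
  have r4 : (b4.card : ℝ) ≤ n ^ 2 := by exact_mod_cast c4
  have r5 : (b5.card : ℝ) ≤ n ^ 2 := by exact_mod_cast c5
  have r6 : (b6.card : ℝ) ≤ n ^ 2 := by exact_mod_cast c6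
  have s1 : 36 * (n:ℝ)^2 ≤ c * n ^ 3 := by
    have : 36 * (n:ℝ)^2 ≤ (c * n) * n ^ 2 := by gcongr
    linarith
  have s2 : 12 * μ * (n:ℝ)^3 ≤ c * n ^ 3 := by gcongr
  linarith

end helpers

section helpers
open Finset
open scoped Classical

/-- switching one layer along a 4-cycle -/
noncomputable def sw {L V : Type*} (σ : L → Equiv.Perm V) (l : L) (a : V) (p : V × V × V) :
    L → Equiv.Perm V :=
  Function.update σ l (σ l * rot4 a p.1 p.2.1 p.2.2)

/-- double counting for switchings -/
theorem switch_count {L V : Type*} [Fintype L] [Fintype V] (Q : (L → Equiv.Perm V) → Prop)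
    (l : L) (a b : V) (good : (L → Equiv.Perm V) → Finset (V × V × V)) (M : ℝ)
    (hgood : ∀ σ, Q σ → σ l a = b → M ≤ (good σ).card)
    (hdist : ∀ σ, ∀ p ∈ good σ,
      (a ≠ p.1 ∧ a ≠ p.2.1 ∧ a ≠ p.2.2 ∧ p.1 ≠ p.2.1 ∧ p.1 ≠ p.2.2 ∧ p.2.1 ≠ p.2.2))
    (hQ : ∀ σ, Q σ → σ l a = b → ∀ p ∈ good σ, Q (sw σ l a p)) :
    ((univ.filter fun σ => Q σ ∧ σ l a = b).card : ℝ) * M ≤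
      ((univ.filter fun σ => Q σ).card : ℝ) * (Fintype.card V : ℝ) ^ 2 := by
  set S := (univ.filter fun σ : L → Equiv.Perm V => Q σ ∧ σ l a = b) with hS
  have h1 : (S.card : ℝ) * M ≤ ((S.sigma good).card : ℝ) := by
    rw [Finset.card_sigma]
    push_cast
    have := Finset.card_nsmul_le_sum S (fun σ => ((good σ).card : ℝ)) M (fun σ hσ => by
      simp only [hS, Finset.mem_filter] at hσ
      exact hgood σ hσ.2.1 hσ.2.2)
    simpa using this
  have h2 : (S.sigma good).card ≤ ((univ.filter fun σ : L → Equiv.Perm V => Q σ) ×ˢ (univ : Finset (V × V))).card := by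
    apply Finset.card_le_card_of_injOn (fun s => (sw s.1 l a s.2, (s.2.1, s.2.2.1)))
    · intro s hs
      have hs' := Finset.mem_sigma.1 (Finset.mem_coe.1 hs)
      simp only [hS, Finset.mem_filter] at hs'
      simp only [Finset.coe_product, Set.mem_prod, Finset.mem_coe, Finset.mem_filter, Finset.mem_univ, true_and, and_true]
      exact hQ _ hs'.1.2.1 hs'.1.2.2 _ hs'.2
    · rintro ⟨σ, x, y, z⟩ hs ⟨σ', x', y', z'⟩ hs' heq
      have hs1 := Finset.mem_sigma.1 (Finset.mem_coe.1 hs)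
      have hs1' := Finset.mem_sigma.1 (Finset.mem_coe.1 hs')
      simp only [hS, Finset.mem_filter] at hs1 hs1'
      simp only [Prod.mk.injEq] at heq
      obtain ⟨heq, rfl, rfl⟩ := heq
      obtain ⟨d1, d2, d3, d4, d5, d6⟩ := hdist _ _ hs1.2
      obtain ⟨e1, e2, e3, e4, e5, e6⟩ := hdist _ _ hs1'.2
      have hl := congrFun heq l
      simp only [sw, Function.update_self] at hl
      have hz : (σ l * rot4 a x y z) z = b := by
        rw [Equiv.Perm.mul_apply, (rot4_spec d1 d2 d3 d4 d5 d6).2.2.2.1]; exact hs1.1.2.2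
      have hz' : (σ' l * rot4 a x y z') z' = b := by
        rw [Equiv.Perm.mul_apply, (rot4_spec e1 e2 e3 e4 e5 e6).2.2.2.1]; exact hs1'.1.2.2
      have hzz : z = z' := by
        rw [hl] at hz
        exact (Equiv.injective _) (hz.trans hz'.symm)
      subst hzz
      have hl' : σ l = σ' l := mul_right_cancel hl
      have : σ = σ' := by
        funext l'
        by_cases h : l' = l
        · subst h; exact hl'
        · have := congrFun heq l'
          simpa [sw, Function.update_of_ne h] using this
      subst this
      rfl
  rw [Finset.card_product] at h2
  have h3 : ((S.sigma good).card : ℝ) ≤ ((univ.filter fun σ : L → Equiv.Perm V => Q σ).card : ℝ) * (Fintype.card V : ℝ) ^ 2 := by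
    have : (univ : Finset (V × V)).card = Fintype.card V ^ 2 := by simp [sq]
    rw [this] at h2
    exact_mod_cast h2
  linarith

/-- validity of a family of permutations -/
def Valid {L V : Type*} (A B : L → Finset V) (adj : L → V → V → Prop) (σ : L → Equiv.Perm V) : Prop :=
  ∀ l, (∀ x, x ∈ A l ↔ σ l x ∈ B l) ∧ ∀ x ∈ A l, adj l x (σ l x)

def Inn {L V : Type*} (σ : L → Equiv.Perm V) (e : L × V × V) : Prop := σ e.1 e.2.1 = e.2.2

def Conf {L V : Type*} (adj : L → V → V → Prop) (col : V → V → ℕ) (e f : L × V × V) : Prop :=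
  adj e.1 e.2.1 e.2.2 ∧ adj f.1 f.2.1 f.2.2 ∧ col e.2.1 e.2.2 = col f.2.1 f.2.2 ∧ e ≠ f

def Touch {L V : Type*} (e f : L × V × V) : Prop := e.1 = f.1 ∧ (e.2.1 = f.2.1 ∨ e.2.2 = f.2.2)

/-- existence of a single perfect matching in a layer -/
theorem exists_layer {V : Type*} [Fintype V] (A B : Finset V) (adj : V → V → Prop)
    (hadj : ∀ x y, adj x y → x ∈ A ∧ y ∈ B) (hcard : A.card = B.card)
    (c : ℝ) (hn : 36 ≤ c * Fintype.card V) (hc : 0 < c)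
    (hR : ∀ (σ : Equiv.Perm V), (∀ x, x ∈ A ↔ σ x ∈ B) → ∀ a ∈ A,
      c * (Fintype.card V : ℝ) ^ 3 ≤ (triples adj σ a).card) :
    ∃ σ : Equiv.Perm V, (∀ x, x ∈ A ↔ σ x ∈ B) ∧ ∀ x ∈ A, adj x (σ x) := by
  set S := univ.filter fun σ : Equiv.Perm V => ∀ x, x ∈ A ↔ σ x ∈ B with hS
  have hSne : S.Nonempty := by
    have e : {x // x ∈ A} ≃ {x // x ∈ B} := Fintype.equivOfCardEq (by simpa using hcard)
    refine ⟨e.extendSubtype, ?_⟩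
    simp only [hS, Finset.mem_filter, Finset.mem_univ, true_and]
    intro x
    constructor
    · intro hx; exact e.extendSubtype_mem x hx
    · intro hx; by_contra h; exact e.extendSubtype_not_mem x h hx
  obtain ⟨σ, hσ, hmax⟩ := Finset.exists_max_image S (fun σ => (univ.filter fun x => adj x (σ x)).card) hSne
  simp only [hS, Finset.mem_filter, Finset.mem_univ, true_and] at hσ
  refine ⟨σ, hσ, ?_⟩
  by_contra hcon
  push Not at hcon
  obtain ⟨a, ha, hna⟩ := hcon
  have hcnt : ∃ p ∈ triples adj σ a,
      (a ≠ p.1 ∧ a ≠ p.2.1 ∧ a ≠ p.2.2 ∧ p.1 ≠ p.2.1 ∧ p.1 ≠ p.2.2 ∧ p.2.1 ≠ p.2.2) := by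
    have hpos : (0:ℝ) < Fintype.card V := by
      by_contra h
      have : (0:ℝ) ≤ Fintype.card V := Nat.cast_nonneg _
      nlinarith
    have hg := goodTriples_card adj (fun x y => (Fintype.equivFin (V × V) (x, y)).val) σ a ∅ ∅ (by simp)
      (c / 12 * Fintype.card V) c (c / 12) le_rfl (by simp; positivity) (by
        intro cc
        have h1 : (univ.filter fun p : V × V => adj p.1 p.2 ∧ (Fintype.equivFin (V × V) (p.1, p.2)).val = cc).card ≤ 1 := by
          rw [Finset.card_le_one]
          intro p hp q hq
          have hp' := (Finset.mem_filter.1 hp).2.2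
          have hq' := (Finset.mem_filter.1 hq).2.2
          exact (Fintype.equivFin (V × V)).injective (Fin.ext (hp'.trans hq'.symm))
        have h2 : ((univ.filter fun p : V × V => adj p.1 p.2 ∧ (Fintype.equivFin (V × V) (p.1, p.2)).val = cc).card : ℝ) ≤ 1 := by
          exact_mod_cast h1
        linarith) (by linarith) hn (hR σ hσ a ha)
    have hg2 : (0:ℝ) < ((goodTriples adj (fun x y => (Fintype.equivFin (V × V) (x, y)).val) σ a ∅ ∅).card : ℝ) :=
      lt_of_lt_of_le (by positivity) hg
    have hg3 : 0 < (goodTriples adj (fun x y => (Fintype.equivFin (V × V) (x, y)).val) σ a ∅ ∅).card := by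
      exact_mod_cast hg2
    obtain ⟨p, hp⟩ := Finset.card_pos.1 hg3
    have hp' := Finset.mem_filter.1 hp
    exact ⟨p, hp'.1, hp'.2.1⟩
  obtain ⟨⟨x, y, z⟩, hp, d1, d2, d3, d4, d5, d6⟩ := hcnt
  simp only [triples, Finset.mem_filter, Finset.mem_univ, true_and] at hp d1 d2 d3 d4 d5 d6
  obtain ⟨r1, r2, r3, r4, r5⟩ := rot4_spec d1 d2 d3 d4 d5 d6
  obtain ⟨p1, p2, p3, p4⟩ := hp
  have hmem : σ * rot4 a x y z ∈ S := by
    simp only [hS, Finset.mem_filter, Finset.mem_univ, true_and, Equiv.Perm.mul_apply]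
    intro w
    rw [← hσ]
    have hx : x ∈ A := (hσ x).2 (hadj _ _ p1).2
    have hy : y ∈ A := (hσ y).2 (hadj _ _ p2).2
    have hz : z ∈ A := (hσ z).2 (hadj _ _ p3).2
    by_cases w0 : w = a
    · subst w0; simp [r1, ha, hx]
    by_cases w1 : w = x
    · subst w1; simp [r2, hx, hy]
    by_cases w2 : w = y
    · subst w2; simp [r3, hy, hz]
    by_cases w3 : w = z
    · subst w3; simp [r4, ha, hz]
    rw [r5 w w0 w1 w2 w3]
  have hlt : (univ.filter fun x => adj x (σ x)).card < (univ.filter fun w => adj w ((σ * rot4 a x y z) w)).card := by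
    apply Finset.card_lt_card
    rw [Finset.ssubset_iff_of_subset]
    · refine ⟨a, ?_, ?_⟩
      · refine Finset.mem_filter.2 ⟨Finset.mem_univ _, ?_⟩
        rw [Equiv.Perm.mul_apply, r1]; exact p1
      · simpa using hna
    · intro w hw
      have hw := (Finset.mem_filter.1 hw).2
      refine Finset.mem_filter.2 ⟨Finset.mem_univ _, ?_⟩
      rw [Equiv.Perm.mul_apply]
      by_cases w0 : w = a
      · subst w0; rw [r1]; exact p1
      by_cases w1 : w = x
      · subst w1; rw [r2]; exact p2
      by_cases w2 : w = y
      · subst w2; rw [r3]; exact p3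
      by_cases w3 : w = z
      · subst w3; rw [r4]; exact p4
      rw [r5 w w0 w1 w2 w3]; exact hw
  exact absurd (hmax _ hmem) (not_le.2 hlt)
end helpers

section helpers
open Finset
open scoped Classical

set_option maxHeartbeats 1000000 in
theorem switch_step {L V : Type*} [Fintype L] [Nonempty L] [Fintype V] (A B : L → Finset V)
    (adj : L → V → V → Prop) (col : V → V → ℕ)
    (hadj : ∀ l x y, adj l x y → x ∈ A l ∧ y ∈ B l)
    (c μ K : ℝ) (hμ : 12 * μ ≤ c) (hn : 36 ≤ c * Fintype.card V) (hK0 : 0 ≤ K)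
    (hK : ∀ l cc, ((univ.filter fun p : V × V => adj l p.1 p.2 ∧ col p.1 p.2 = cc).card : ℝ) ≤ K)
    (hLK : Fintype.card L * K ≤ μ * Fintype.card V)
    (hR : ∀ l (σ : Equiv.Perm V), (∀ x, x ∈ A l ↔ σ x ∈ B l) → ∀ a ∈ A l,
      c * (Fintype.card V : ℝ) ^ 3 ≤ (triples (adj l) σ a).card)
    (e : L × V × V) (he : e.2.1 ∈ A e.1) (F : Finset (L × V × V)) (hF1 : F.card ≤ 1)
    (hF : ∀ f ∈ F, ¬ Touch e f) (S : Finset ((L × V × V) × (L × V × V)))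
    (hS : ∀ s ∈ S, Conf adj col s.1 s.2 → ¬ Touch e s.1 ∧ ¬ Touch e s.2)
    (Q : (L → Equiv.Perm V) → Prop)
    (hQ : ∀ σ, Q σ ↔ (Valid A B adj σ ∧ (∀ f ∈ F, Inn σ f) ∧
      ∀ s ∈ S, ¬ (Conf adj col s.1 s.2 ∧ Inn σ s.1 ∧ Inn σ s.2))) :
    ((univ.filter fun σ => Q σ ∧ σ e.1 e.2.1 = e.2.2).card : ℝ) * (c / 2 * (Fintype.card V : ℝ) ^ 3) ≤
      ((univ.filter fun σ => Q σ).card : ℝ) * (Fintype.card V : ℝ) ^ 2 := by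
  obtain ⟨l, a, b⟩ := e
  simp only at he ⊢
  have hL1 : (1:ℝ) ≤ Fintype.card L := by exact_mod_cast Fintype.card_pos
  have hn0 : (0:ℝ) ≤ Fintype.card V := Nat.cast_nonneg _
  set U : (L → Equiv.Perm V) → Finset ℕ := fun σ => univ.image fun q : L × V => col q.2 (σ q.1 q.2) with hU
  have hUc : ∀ σ, ((U σ).card : ℝ) ≤ Fintype.card L * Fintype.card V := by
    intro σ
    have : (U σ).card ≤ Fintype.card L * Fintype.card V := by
      refine Finset.card_image_le.trans ?_
      rw [Finset.card_univ, Fintype.card_prod]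
    exact_mod_cast this
  set O := F.image fun f => f.2.1 with hO
  have hOc : O.card ≤ 1 := Finset.card_image_le.trans hF1
  apply switch_count Q l a b (fun σ => goodTriples (adj l) col (σ l) a O (U σ))
  · intro σ hσ _
    rw [hQ] at hσ
    apply goodTriples_card (adj l) col (σ l) a O (U σ) hOc K c μ
    · nlinarith
    · have := hUc σ
      nlinarith
    · exact hK l
    · exact hμ
    · exact hn
    · exact hR l (σ l) (hσ.1 l).1 a he
  · intro σ p hp
    exact (Finset.mem_filter.1 hp).2.1
  · rintro σ hσ hab ⟨x, y, z⟩ hp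
    rw [hQ] at hσ ⊢
    obtain ⟨hp1, ⟨d1, d2, d3, d4, d5, d6⟩, ⟨o1, o2, o3⟩, u1, u2, u3⟩ := Finset.mem_filter.1 hp
    obtain ⟨p1, p2, p3, p4⟩ := (Finset.mem_filter.1 hp1).2
    simp only at d1 d2 d3 d4 d5 d6 o1 o2 o3 u1 u2 u3 p1 p2 p3 p4
    obtain ⟨r1, r2, r3, r4, r5⟩ := rot4_spec d1 d2 d3 d4 d5 d6
    obtain ⟨hv, hf, hs⟩ := hσ
    have hsl : sw σ l a (x, y, z) l = σ l * rot4 a x y z := by simp [sw]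
    have hsn : ∀ l', l' ≠ l → sw σ l a (x, y, z) l' = σ l' := by
      intro l' h; simp [sw, Function.update_of_ne h]
    have hx : x ∈ A l := ((hv l).1 x).2 (hadj _ _ _ p1).2
    have hy : y ∈ A l := ((hv l).1 y).2 (hadj _ _ _ p2).2
    have hz : z ∈ A l := ((hv l).1 z).2 (hadj _ _ _ p3).2
    refine ⟨?_, ?_, ?_⟩
    · intro l'
      by_cases hl : l' = l
      · subst hl
        rw [hsl]
        constructor
        · intro w
          rw [Equiv.Perm.mul_apply, ← (hv l').1]
          by_cases w0 : w = a
          · subst w0; simp [r1, he, hx]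
          by_cases w1 : w = x
          · subst w1; simp [r2, hx, hy]
          by_cases w2 : w = y
          · subst w2; simp [r3, hy, hz]
          by_cases w3 : w = z
          · subst w3; simp [r4, he, hz]
          rw [r5 w w0 w1 w2 w3]
        · intro w hw
          rw [Equiv.Perm.mul_apply]
          by_cases w0 : w = a
          · subst w0; rw [r1]; exact p1
          by_cases w1 : w = x
          · subst w1; rw [r2]; exact p2
          by_cases w2 : w = y
          · subst w2; rw [r3]; exact p3
          by_cases w3 : w = z
          · subst w3; rw [r4]; exact p4
          rw [r5 w w0 w1 w2 w3]; exact (hv l').2 w hw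
      · rw [hsn l' hl]; exact hv l'
    · rintro ⟨l', x', y'⟩ hfF
      have h1 := hf _ hfF
      have hxO : x' ∈ O := Finset.mem_image.2 ⟨_, hfF, rfl⟩
      simp only [Inn] at h1 ⊢
      by_cases hl : l' = l
      · subst hl
        rw [hsl, Equiv.Perm.mul_apply, r5 x', h1]
        · rintro rfl; exact hF _ hfF ⟨rfl, Or.inl rfl⟩
        · rintro rfl; exact o1 hxO
        · rintro rfl; exact o2 hxO
        · rintro rfl; exact o3 hxO
      · rw [hsn l' hl]; exact h1
    · have hcl : ∀ g : L × V × V, ¬ Touch (l, a, b) g → Inn (sw σ l a (x, y, z)) g →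
          Inn σ g ∨ g = (l, x, σ l y) ∨ g = (l, y, σ l z) := by
        rintro ⟨l', x', y'⟩ ht hi
        simp only [Inn] at hi ⊢
        by_cases hl : l' = l
        · subst hl
          rw [hsl, Equiv.Perm.mul_apply] at hi
          by_cases w0 : x' = a
          · subst w0; exact absurd ⟨rfl, Or.inl rfl⟩ ht
          by_cases w1 : x' = x
          · subst w1; rw [r2] at hi; right; left; rw [hi]
          by_cases w2 : x' = y
          · subst w2; rw [r3] at hi; right; right; rw [hi]
          by_cases w3 : x' = z
          · subst w3; rw [r4, hab] at hi; exact absurd ⟨rfl, Or.inr hi⟩ ht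
          rw [r5 x' w0 w1 w2 w3] at hi; exact Or.inl hi
        · rw [hsn l' hl] at hi; exact Or.inl hi
      have hold : ∀ g : L × V × V, Inn σ g → col g.2.1 g.2.2 ∈ U σ := by
        rintro ⟨l', x', y'⟩ hi
        simp only [Inn] at hi
        refine Finset.mem_image.2 ⟨(l', x'), Finset.mem_univ _, ?_⟩
        simp [hi]
      rintro ⟨g, h⟩ hgS ⟨hc, hi1, hi2⟩
      have hc0 := hc
      obtain ⟨t1, t2⟩ := hS _ hgS hc
      obtain ⟨-, -, hcc, hne⟩ := hc
      simp only at hi1 hi2 t1 t2 hcc hne hc0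
      rcases hcl g t1 hi1 with h1 | h1 | h1 <;> rcases hcl h t2 hi2 with h2 | h2 | h2
      · exact hs _ hgS ⟨hc0, h1, h2⟩
      · have := hold g h1; rw [hcc, h2] at this; exact u1 this
      · have := hold g h1; rw [hcc, h2] at this; exact u2 this
      · have := hold h h2; rw [← hcc, h1] at this; exact u1 this
      · exact hne (h1.trans h2.symm)
      · rw [h1, h2] at hcc; exact u3 hcc
      · have := hold h h2; rw [← hcc, h1] at this; exact u2 this
      · rw [h1, h2] at hcc; exact u3 hcc.symm
      · exact hne (h1.trans h2.symm)

/-- number of conflicts touching a given arc -/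
theorem conf_touch_card {L V : Type*} [Fintype L] [Fintype V]
    (adj : L → V → V → Prop) (col : V → V → ℕ) (μ K : ℝ) 
    (hK : ∀ l cc, ((univ.filter fun p : V × V => adj l p.1 p.2 ∧ col p.1 p.2 = cc).card : ℝ) ≤ K)
    (hLK : Fintype.card L * K ≤ μ * Fintype.card V) (e : L × V × V) :
    ((univ.filter fun s : (L × V × V) × (L × V × V) => Touch e s.1 ∧ adj s.2.1 s.2.2.1 s.2.2.2 ∧
      col s.1.2.1 s.1.2.2 = col s.2.2.1 s.2.2.2).card : ℝ) ≤ 2 * μ * (Fintype.card V : ℝ) ^ 2 := by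
  set T := (univ.filter fun g : L × V × V => Touch e g) with hT
  set n := Fintype.card V
  have hTc : (T.card : ℝ) ≤ 2 * n := by
    have : T ⊆ (univ.image fun y : V => (e.1, e.2.1, y)) ∪ (univ.image fun x : V => (e.1, x, e.2.2)) := by
      rintro ⟨l, x, y⟩ hg
      obtain ⟨h1, h2⟩ := (Finset.mem_filter.1 hg).2
      simp only at h1 h2
      simp only [Finset.mem_union, Finset.mem_image, Finset.mem_univ, true_and, Prod.mk.injEq]
      rcases h2 with h2 | h2
      · left; exact ⟨y, h1, h2, rfl⟩
      · right; exact ⟨x, h1, rfl, h2⟩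
    have h1 : T.card ≤ n + n := (Finset.card_le_card this).trans ((Finset.card_union_le _ _).trans
      (add_le_add Finset.card_image_le Finset.card_image_le))
    have : (T.card : ℝ) ≤ n + n := by exact_mod_cast h1
    linarith
  have hcol : ∀ cc, ((univ.filter fun h : L × V × V => adj h.1 h.2.1 h.2.2 ∧ cc = col h.2.1 h.2.2).card : ℝ) ≤ μ * n := by
    intro cc
    have : (univ.filter fun h : L × V × V => adj h.1 h.2.1 h.2.2 ∧ cc = col h.2.1 h.2.2) ⊆
      (univ : Finset L).biUnion fun l => (univ.filter fun p : V × V => adj l p.1 p.2 ∧ col p.1 p.2 = cc).image fun p => (l, p) := by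
      rintro ⟨l, x, y⟩ hg
      obtain ⟨h1, h2⟩ := (Finset.mem_filter.1 hg).2
      exact Finset.mem_biUnion.2 ⟨l, Finset.mem_univ _, Finset.mem_image.2 ⟨(x, y), Finset.mem_filter.2 ⟨Finset.mem_univ _, h1, h2.symm⟩, rfl⟩⟩
    have h1 := (Finset.card_le_card this).trans Finset.card_biUnion_le
    have h2 : ∑ l : L, (((univ.filter fun p : V × V => adj l p.1 p.2 ∧ col p.1 p.2 = cc).image fun p => (l, p)).card : ℝ) ≤ ∑ l : L, K := by
      apply Finset.sum_le_sum
      intro l _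
      exact le_trans (by exact_mod_cast Finset.card_image_le) (hK l cc)
    simp only [Finset.sum_const, Finset.card_univ, nsmul_eq_mul] at h2
    have h3 : ((univ.filter fun h : L × V × V => adj h.1 h.2.1 h.2.2 ∧ cc = col h.2.1 h.2.2).card : ℝ) ≤ 
      ∑ l : L, (((univ.filter fun p : V × V => adj l p.1 p.2 ∧ col p.1 p.2 = cc).image fun p => (l, p)).card : ℝ) := by exact_mod_cast h1
    linarith
  have hsub : (univ.filter fun s : (L × V × V) × (L × V × V) => Touch e s.1 ∧ adj s.2.1 s.2.2.1 s.2.2.2 ∧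
      col s.1.2.1 s.1.2.2 = col s.2.2.1 s.2.2.2) ⊆ T.biUnion fun g => 
      (univ.filter fun h : L × V × V => adj h.1 h.2.1 h.2.2 ∧ col g.2.1 g.2.2 = col h.2.1 h.2.2).image fun h => (g, h) := by
    rintro ⟨g, h⟩ hg
    obtain ⟨h1, h2, h3⟩ := (Finset.mem_filter.1 hg).2
    exact Finset.mem_biUnion.2 ⟨g, Finset.mem_filter.2 ⟨Finset.mem_univ _, h1⟩, Finset.mem_image.2 ⟨h, Finset.mem_filter.2 ⟨Finset.mem_univ _, h2, h3⟩, rfl⟩⟩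
  have h1 := (Finset.card_le_card hsub).trans Finset.card_biUnion_le
  have h2 : ∑ g ∈ T, (((univ.filter fun h : L × V × V => adj h.1 h.2.1 h.2.2 ∧ col g.2.1 g.2.2 = col h.2.1 h.2.2).image fun h => (g, h)).card : ℝ) ≤ ∑ g ∈ T, μ * n := by
    apply Finset.sum_le_sum
    intro g _
    exact le_trans (by exact_mod_cast Finset.card_image_le) (hcol _)
  simp only [Finset.sum_const, nsmul_eq_mul] at h2
  have h3 : ((univ.filter fun s : (L × V × V) × (L × V × V) => Touch e s.1 ∧ adj s.2.1 s.2.2.1 s.2.2.2 ∧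
      col s.1.2.1 s.1.2.2 = col s.2.2.1 s.2.2.2).card : ℝ) ≤ ∑ g ∈ T, (((univ.filter fun h : L × V × V => adj h.1 h.2.1 h.2.2 ∧ col g.2.1 g.2.2 = col h.2.1 h.2.2).image fun h => (g, h)).card : ℝ) := by
    exact_mod_cast h1
  have hμn : 0 ≤ μ * n := le_trans (Nat.cast_nonneg _) (hcol 0)
  nlinarith

set_option maxHeartbeats 1000000 in
theorem rainbow_layers {L V : Type*} [Fintype L] [Nonempty L] [Fintype V] (A B : L → Finset V)
    (adj : L → V → V → Prop) (col : V → V → ℕ)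
    (hadj : ∀ l x y, adj l x y → x ∈ A l ∧ y ∈ B l) (hcard : ∀ l, (A l).card = (B l).card)
    (c μ K : ℝ) (hc : 0 < c) (hμ : 12 * μ ≤ c) (hμ2 : 128 * μ ≤ c ^ 2)
    (hn : 36 ≤ c * Fintype.card V) (hK0 : 0 ≤ K)
    (hK : ∀ l cc, ((univ.filter fun p : V × V => adj l p.1 p.2 ∧ col p.1 p.2 = cc).card : ℝ) ≤ K)
    (hLK : Fintype.card L * K ≤ μ * Fintype.card V)
    (hR : ∀ l (σ : Equiv.Perm V), (∀ x, x ∈ A l ↔ σ x ∈ B l) → ∀ a ∈ A l,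
      c * (Fintype.card V : ℝ) ^ 3 ≤ (triples (adj l) σ a).card) :
    ∃ σ : L → Equiv.Perm V, Valid A B adj σ ∧ ∀ l x l' x', x ∈ A l → x' ∈ A l' →
      col x (σ l x) = col x' (σ l' x') → l = l' ∧ x = x' := by
  set n := Fintype.card V with hnV
  set Ω0 := univ.filter fun σ : L → Equiv.Perm V => Valid A B adj σ with hΩ0
  have hne : Ω0.Nonempty := by
    have := fun l => exists_layer (A l) (B l) (adj l) (hadj l) (hcard l) c hn hc (hR l)
    choose σ hσ using this
    exact ⟨σ, Finset.mem_filter.2 ⟨Finset.mem_univ _, hσ⟩⟩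
  set AA : ((L × V × V) × (L × V × V)) → Finset (L → Equiv.Perm V) := fun s =>
    univ.filter fun σ => Conf adj col s.1 s.2 ∧ Inn σ s.1 ∧ Inn σ s.2 with hAA
  have hAAm : ∀ s σ, σ ∈ AA s ↔ (Conf adj col s.1 s.2 ∧ Inn σ s.1 ∧ Inn σ s.2) := by
    intro s σ; simp only [hAA, Finset.mem_filter, Finset.mem_univ, true_and]
  set nb : ((L × V × V) × (L × V × V)) → Finset ((L × V × V) × (L × V × V)) := fun s =>
    univ.filter fun j => Conf adj col j.1 j.2 ∧ ((Touch s.1 j.1 ∨ Touch s.1 j.2) ∨ (Touch s.2 j.1 ∨ Touch s.2 j.2)) with hnb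
  have hnbc : ∀ s, ((nb s).card : ℝ) ≤ 8 * μ * (n : ℝ) ^ 2 := by
    intro s
    have hT := fun e => conf_touch_card adj col μ K hK hLK e
    set X : (L × V × V) → Finset ((L × V × V) × (L × V × V)) := fun e => 
      (univ.filter fun s : (L × V × V) × (L × V × V) => Touch e s.1 ∧ adj s.2.1 s.2.2.1 s.2.2.2 ∧
      col s.1.2.1 s.1.2.2 = col s.2.2.1 s.2.2.2) with hX
    have hsub : nb s ⊆ (X s.1 ∪ (X s.1).image Prod.swap) ∪ (X s.2 ∪ (X s.2).image Prod.swap) := by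
      rintro ⟨g, h⟩ hj
      obtain ⟨⟨c1, c2, c3, -⟩, hj⟩ := (Finset.mem_filter.1 hj).2
      have key1 : ∀ e, Touch e g → (g, h) ∈ X e := fun e he =>
        Finset.mem_filter.2 ⟨Finset.mem_univ _, he, c2, c3⟩
      have key2 : ∀ e, Touch e h → (g, h) ∈ (X e).image Prod.swap := fun e he =>
        Finset.mem_image.2 ⟨(h, g), Finset.mem_filter.2 ⟨Finset.mem_univ _, he, c1, c3.symm⟩, rfl⟩
      simp only [Finset.mem_union]
      rcases hj with (hj | hj) | (hj | hj)
      · exact Or.inl (Or.inl (key1 _ hj))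
      · exact Or.inl (Or.inr (key2 _ hj))
      · exact Or.inr (Or.inl (key1 _ hj))
      · exact Or.inr (Or.inr (key2 _ hj))
    have h1 : (nb s).card ≤ ((X s.1).card + (X s.1).card) + ((X s.2).card + (X s.2).card) :=
      (Finset.card_le_card hsub).trans ((Finset.card_union_le _ _).trans (add_le_add
        ((Finset.card_union_le _ _).trans (add_le_add le_rfl Finset.card_image_le))
        ((Finset.card_union_le _ _).trans (add_le_add le_rfl Finset.card_image_le))))
    have h2 : ((nb s).card : ℝ) ≤ ((X s.1).card + (X s.1).card) + ((X s.2).card + (X s.2).card) := by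
      exact_mod_cast h1
    have h3 := hT s.1
    have h4 := hT s.2
    linarith
  have hn0 : (0:ℝ) < n := by
    by_contra h
    have : (0:ℝ) ≤ n := Nat.cast_nonneg _
    nlinarith
  obtain ⟨σ, hσ, hσ2⟩ := lopsided_lll Ω0 hne AA nb ((c * n / 2) ^ 2) (8 * μ * (n : ℝ) ^ 2)
    (by
      have : 0 ≤ (n:ℝ)^2 := by positivity
      nlinarith) (by nlinarith) hnbc (by
      rintro ⟨e, f⟩ S hS
      obtain ⟨Q0, hQ0⟩ : ∃ Q0 : (L → Equiv.Perm V) → Prop, ∀ σ, Q0 σ ↔ (Valid A B adj σ ∧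
        ∀ s ∈ S, ¬ (Conf adj col s.1 s.2 ∧ Inn σ s.1 ∧ Inn σ s.2)) := ⟨_, fun _ => Iff.rfl⟩
      have eR : ∀ inst : DecidablePred (fun ω => ∀ j ∈ S, ω ∉ AA j), @Finset.filter _ (fun ω => ∀ j ∈ S, ω ∉ AA j) inst Ω0 = univ.filter fun σ => Q0 σ := by
        intro inst
        ext σ
        rw [Finset.mem_filter, Finset.mem_filter, Finset.mem_filter]
        simp only [hAAm, hQ0, Finset.mem_univ, true_and]
      have hnn : (0:ℝ) ≤ ((Ω0.filter fun ω => ∀ j ∈ S, ω ∉ AA j).card : ℝ) := Nat.cast_nonneg _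
      by_cases hcf : Conf adj col e f ∧ ¬ Touch e f
      · obtain ⟨hcf, hnt⟩ := hcf
        have eL : ∀ inst : DecidablePred (fun ω => ω ∈ AA (e, f) ∧ ∀ j ∈ S, ω ∉ AA j), @Finset.filter _ (fun ω => ω ∈ AA (e, f) ∧ ∀ j ∈ S, ω ∉ AA j) inst Ω0 =
            univ.filter fun σ => (Q0 σ ∧ Inn σ f) ∧ σ e.1 e.2.1 = e.2.2 := by
          intro inst
          ext σ
          constructor
          · intro h
            have h := Finset.mem_filter.1 h
            simp only [hAAm] at h
            obtain ⟨h1, ⟨h2, h3, h4⟩, h5⟩ := h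
            exact Finset.mem_filter.2 ⟨Finset.mem_univ _, ⟨(hQ0 σ).2 ⟨(Finset.mem_filter.1 h1).2, h5⟩, h4⟩, h3⟩
          · intro h
            obtain ⟨⟨h0, h4⟩, h3⟩ := (Finset.mem_filter.1 h).2
            obtain ⟨h1, h5⟩ := (hQ0 σ).1 h0
            refine Finset.mem_filter.2 ⟨Finset.mem_filter.2 ⟨Finset.mem_univ _, h1⟩, ?_⟩
            simp only [hAAm]
            exact ⟨⟨hcf, h3, h4⟩, h5⟩
        have hS' : ∀ s ∈ S, Conf adj col s.1 s.2 → (¬ Touch e s.1 ∧ ¬ Touch e s.2) ∧ (¬ Touch f s.1 ∧ ¬ Touch f s.2) := by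
          intro s hs hc
          have := hS s hs
          simp only [hnb, Finset.mem_filter, Finset.mem_univ, true_and, not_and, not_or] at this
          exact this hc
        have s1 := switch_step A B adj col hadj c μ K hμ hn hK0 hK hLK hR e (hadj _ _ _ hcf.1).1 {f} (by simp)
          (by intro g hg; rw [Finset.mem_singleton] at hg; subst hg; exact hnt) S (fun s hs hc => (hS' s hs hc).1)
          (fun σ => Q0 σ ∧ Inn σ f) (by
            intro σ
            simp only [hQ0, Finset.mem_singleton, forall_eq]
            tauto)
        have s2 := switch_step A B adj col hadj c μ K hμ hn hK0 hK hLK hR f (hadj _ _ _ hcf.2.1).1 ∅ (by simp)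
          (by simp) S (fun s hs hc => (hS' s hs hc).2)
          (fun σ => Q0 σ) (by
            intro σ
            simp only [hQ0, Finset.notMem_empty, false_imp_iff, implies_true, true_and])
        rw [eR, eL]
        have s2' : ((univ.filter fun σ => Q0 σ ∧ Inn σ f).card : ℝ) * (c / 2 * (n : ℝ) ^ 3) ≤
            ((univ.filter fun σ => Q0 σ).card : ℝ) * (n : ℝ) ^ 2 := by
          refine le_trans (le_of_eq ?_) (le_trans s2 (le_of_eq ?_))
          · congr 2
          · congr 2
        set x := ((univ.filter fun σ => (Q0 σ ∧ Inn σ f) ∧ σ e.1 e.2.1 = e.2.2).card : ℝ)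
        set y := ((univ.filter fun σ => Q0 σ ∧ Inn σ f).card : ℝ)
        set z := ((univ.filter fun σ => Q0 σ).card : ℝ)
        have n2 : (0:ℝ) < (n:ℝ)^2 := by positivity
        have t1 : x * (c / 2 * n) ≤ y := by
          refine le_of_mul_le_mul_right ?_ n2
          calc _ = x * (c / 2 * (n:ℝ)^3) := by ring
            _ ≤ _ := by convert s1
        have t2 : y * (c / 2 * n) ≤ z := by
          refine le_of_mul_le_mul_right ?_ n2
          calc _ = y * (c / 2 * (n:ℝ)^3) := by ring
            _ ≤ _ := s2'
        have hcn : 0 ≤ c / 2 * n := by positivity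
        calc x * (c * n / 2) ^ 2 = (x * (c / 2 * n)) * (c / 2 * n) := by ring
          _ ≤ y * (c / 2 * n) := mul_le_mul_of_nonneg_right t1 hcn
          _ ≤ z := t2
      · have : ∀ inst : DecidablePred (fun ω => ω ∈ AA (e, f) ∧ ∀ j ∈ S, ω ∉ AA j), @Finset.filter _ (fun ω => ω ∈ AA (e, f) ∧ ∀ j ∈ S, ω ∉ AA j) inst Ω0 = ∅ := by
          intro inst
          apply Finset.filter_eq_empty_iff.2
          rintro σ - ⟨h1, -⟩
          rw [hAAm] at h1
          obtain ⟨h1, h2, h3⟩ := h1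
          apply hcf
          refine ⟨h1, ?_⟩
          rintro ⟨t1, t2⟩
          apply h1.2.2.2
          obtain ⟨l, x, y⟩ := e
          obtain ⟨l', x', y'⟩ := f
          simp only [Inn] at h2 h3 t1 t2
          subst t1
          rcases t2 with rfl | rfl
          · rw [h2] at h3; rw [h3]
          · have := (σ l).injective (h2.trans h3.symm); rw [this]
        rw [this]
        simp)
  have hv : Valid A B adj σ := (Finset.mem_filter.1 hσ).2
  refine ⟨σ, hv, ?_⟩
  intro l x l' x' hx hx' hcc
  by_contra hcon
  apply hσ2 ((l, x, σ l x), (l', x', σ l' x'))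
  rw [hAAm]
  refine ⟨⟨(hv l).2 x hx, (hv l').2 x' hx', hcc, ?_⟩, rfl, rfl⟩
  intro h
  simp only [Prod.mk.injEq] at h
  exact hcon ⟨h.1, h.2.1⟩
end helpers

section helpers
open Finset
open scoped Classical

theorem factor_of_perms {V : Type*} [Fintype V] (G : SimpleGraph V) (χ : Sym2 V → ℕ) (k : ℕ)
    (π : Fin k → Equiv.Perm V) (hadj : ∀ i v, G.Adj v (π i v))
    (hinj : ∀ i v j w, χ s(v, π i v) = χ s(w, π j w) → i = j ∧ v = w) :
    ∃ H : G.Subgraph, H.IsSpanning ∧ (∀ v : V, (H.neighborSet v).ncard = k + k) ∧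
      ∀ e ∈ H.edgeSet, ∀ f ∈ H.edgeSet, χ e = χ f → e = f := by
  let H : G.Subgraph :=
    { verts := Set.univ
      Adj := fun u v => ∃ i, π i u = v ∨ π i v = u
      adj_sub := by
        rintro u v ⟨i, rfl | rfl⟩
        · exact hadj i u
        · exact (hadj i v).symm
      edge_vert := by intros; trivial
      symm := ⟨by
        rintro u v ⟨i, h⟩
        exact ⟨i, h.symm⟩⟩ }
  refine ⟨H, fun v => trivial, ?_, ?_⟩
  · intro v
    have hset : H.neighborSet v = Set.range (Sum.elim (fun i => π i v) (fun i => (π i).symm v)) := by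
      ext w
      rw [Set.Sum.elim_range]
      constructor
      · rintro ⟨i, h | h⟩
        · exact Or.inl ⟨i, h⟩
        · exact Or.inr ⟨i, by simp [← h]⟩
      · rintro (⟨i, h⟩ | ⟨i, h⟩)
        · exact ⟨i, Or.inl h⟩
        · exact ⟨i, Or.inr (by simp [← h])⟩
    have hi : Function.Injective (Sum.elim (fun i => π i v) (fun i => (π i).symm v)) := by
      have hcross : ∀ i j, π i v ≠ (π j).symm v := by
        intro i j h
        have h2 : π j (π i v) = v := by rw [h]; simp
        have := hinj i v j (π i v) (by rw [h2, Sym2.eq_swap])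
        exact (hadj i v).ne this.2
      rintro (i | i) (j | j) h
      · simp only [Sum.elim_inl] at h
        rw [(hinj i v j v (by rw [h])).1]
      · exact absurd h (hcross i j)
      · exact absurd h.symm (hcross j i)
      · simp only [Sum.elim_inr] at h
        have := hinj i ((π i).symm v) j ((π j).symm v) (by rw [Equiv.apply_symm_apply, Equiv.apply_symm_apply, h])
        rw [this.1]
    rw [hset, Set.ncard_eq_toFinset_card', Set.toFinset_range, Finset.card_image_of_injective _ hi]
    simp
  · have key : ∀ e ∈ H.edgeSet, ∃ i v, e = s(v, π i v) := by
      intro e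
      induction e using Sym2.ind with
      | _ x y =>
        rintro ⟨i, h | h⟩
        · exact ⟨i, x, by rw [h]⟩
        · exact ⟨i, y, by rw [h, Sym2.eq_swap]⟩
    intro e he f hf hc
    obtain ⟨i, v, rfl⟩ := key e he
    obtain ⟨j, w, rfl⟩ := key f hf
    obtain ⟨rfl, rfl⟩ := hinj _ _ _ _ hc
    rfl

theorem triples_lower {V : Type*} [Fintype V] (adj : V → V → Prop) (σ : Equiv.Perm V) (a : V)
    (Z : Finset V) (M : ℝ) (hZ : ∀ z ∈ Z, adj z (σ a))
    (hM : ∀ z ∈ Z, M ≤ ((univ.filter fun p : V × V => adj a (σ p.1) ∧ adj p.1 p.2 ∧ adj (σ.symm p.2) (σ z)).card : ℝ)) :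
    Z.card * M ≤ (triples adj σ a).card := by
  have h1 := Finset.card_le_card_of_injOn (s := Z.sigma fun z => univ.filter fun p : V × V => adj a (σ p.1) ∧ adj p.1 p.2 ∧ adj (σ.symm p.2) (σ z))
    (t := triples adj σ a) (fun s => (s.2.1, σ.symm s.2.2, s.1)) (by
      rintro ⟨z, x, w⟩ hs
      obtain ⟨hz, hp⟩ := Finset.mem_sigma.1 (Finset.mem_coe.1 hs)
      obtain ⟨h1, h2, h3⟩ := (Finset.mem_filter.1 hp).2
      refine Finset.mem_coe.2 (Finset.mem_filter.2 ⟨Finset.mem_univ _, h1, ?_, h3, hZ _ hz⟩)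
      simpa using h2) (by
      rintro ⟨z, x, w⟩ hs ⟨z', x', w'⟩ hs' h
      simp only [Prod.mk.injEq, EmbeddingLike.apply_eq_iff_eq] at h
      obtain ⟨rfl, rfl, rfl⟩ := h
      rfl)
  rw [Finset.card_sigma] at h1
  have h2 := Finset.card_nsmul_le_sum Z (fun z => ((univ.filter fun p : V × V => adj a (σ p.1) ∧ adj p.1 p.2 ∧ adj (σ.symm p.2) (σ z)).card : ℝ)) M hM
  rw [nsmul_eq_mul] at h2
  refine h2.trans ?_
  exact_mod_cast h1

theorem card_filter_perm {V : Type*} [Fintype V] (σ : Equiv.Perm V) (P : V → Prop) :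
    (univ.filter fun x => P (σ x)).card = (univ.filter fun x => P x).card := by
  apply Finset.card_bij (fun x _ => σ x)
  · intro x hx
    exact Finset.mem_filter.2 ⟨Finset.mem_univ _, (Finset.mem_filter.1 hx).2⟩
  · intro x _ y _ h; exact σ.injective h
  · intro y hy
    refine ⟨σ.symm y, Finset.mem_filter.2 ⟨Finset.mem_univ _, ?_⟩, by simp⟩
    simpa using (Finset.mem_filter.1 hy).2

theorem triples_nonext {V : Type*} [Fintype V] (adj : V → V → Prop) (η : ℝ) (hη : 0 ≤ η)
    (hdo : ∀ v, (Fintype.card V : ℝ) / 2 ≤ ((univ.filter fun w => adj v w).card : ℝ))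
    (hdi : ∀ v, (Fintype.card V : ℝ) / 2 ≤ ((univ.filter fun w => adj w v).card : ℝ))
    (hNE : ∀ A B : Finset V, (Fintype.card V : ℝ) / 2 ≤ A.card → (Fintype.card V : ℝ) / 2 ≤ B.card →
      η * (Fintype.card V : ℝ) ^ 2 ≤ ((univ.filter fun p : V × V => p.1 ∈ A ∧ p.2 ∈ B ∧ adj p.1 p.2).card : ℝ))
    (σ : Equiv.Perm V) (a : V) :
    η / 2 * (Fintype.card V : ℝ) ^ 3 ≤ (triples adj σ a).card := by
  have h := triples_lower adj σ a (univ.filter fun z => adj z (σ a)) (η * (Fintype.card V : ℝ) ^ 2)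
    (fun z hz => (Finset.mem_filter.1 hz).2) (by
      intro z _
      have h1 := hNE (univ.filter fun x => adj a (σ x)) (univ.filter fun w => adj (σ.symm w) (σ z)) (by
        rw [card_filter_perm σ (fun x => adj a x)]; exact hdo a) (by
        rw [card_filter_perm σ.symm (fun x => adj x (σ z))]; exact hdi _)
      refine h1.trans ?_
      have : (univ.filter fun p : V × V => p.1 ∈ (univ.filter fun x => adj a (σ x)) ∧ p.2 ∈ (univ.filter fun w => adj (σ.symm w) (σ z)) ∧ adj p.1 p.2) ⊆ (univ.filter fun p : V × V => adj a (σ p.1) ∧ adj p.1 p.2 ∧ adj (σ.symm p.2) (σ z)) := by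
        intro p hp
        obtain ⟨h1, h2, h3⟩ := (Finset.mem_filter.1 hp).2
        exact Finset.mem_filter.2 ⟨Finset.mem_univ _, (Finset.mem_filter.1 h1).2, h3, (Finset.mem_filter.1 h2).2⟩
      exact_mod_cast Finset.card_le_card this)
  have h2 := hdi (σ a)
  have h3 : 0 ≤ η * (Fintype.card V : ℝ) ^ 2 := by positivity
  nlinarith [mul_le_mul_of_nonneg_right h2 h3]

/-- triples inside a cluster -/
theorem triples_cluster {V : Type*} [Fintype V] (A B : Finset V) (adj : V → V → Prop)
    (hadj : ∀ x y, adj x y → x ∈ A ∧ y ∈ B) (m D : ℝ) (hm : 0 ≤ m) (hD : 0 ≤ D) (hB : (B.card : ℝ) ≤ m)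
    (hdo : ∀ v ∈ A, D ≤ ((univ.filter fun w => adj v w).card : ℝ))
    (hdi : ∀ v ∈ B, D ≤ ((univ.filter fun w => adj w v).card : ℝ))
    (hbo : ((A.filter fun v => ((univ.filter fun w => adj v w).card : ℝ) < 3 / 4 * m).card : ℝ) ≤ D / 2)
    (hbi : ((B.filter fun v => ((univ.filter fun w => adj w v).card : ℝ) < 3 / 4 * m).card : ℝ) ≤ D / 2)
    (σ : Equiv.Perm V) (hσ : ∀ x, x ∈ A ↔ σ x ∈ B) (a : V) (ha : a ∈ A) :
    (D / 2) ^ 2 * (m / 2) ≤ (triples adj σ a).card := by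
  set bi := (B.filter fun v => ((univ.filter fun w => adj w v).card : ℝ) < 3 / 4 * m) with hbidef
  set bo := (A.filter fun v => ((univ.filter fun w => adj v w).card : ℝ) < 3 / 4 * m) with hbodef
  set Z := (univ.filter fun z => adj z (σ a)).filter fun z => σ z ∉ bi with hZ
  have hZc : D / 2 ≤ (Z.card : ℝ) := by
    have h1 := hdi (σ a) ((hσ a).1 ha)
    have h2 : (univ.filter fun z => adj z (σ a)) ⊆ Z ∪ bi.image σ.symm := by
      intro z hz
      by_cases hb : σ z ∈ bi
      · exact Finset.mem_union_right _ (Finset.mem_image.2 ⟨σ z, hb, by simp⟩)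
      · exact Finset.mem_union_left _ (Finset.mem_filter.2 ⟨hz, hb⟩)
    have h3 : (univ.filter fun z => adj z (σ a)).card ≤ Z.card + bi.card :=
      (Finset.card_le_card h2).trans ((Finset.card_union_le _ _).trans (add_le_add le_rfl Finset.card_image_le))
    have h4 : ((univ.filter fun z => adj z (σ a)).card : ℝ) ≤ Z.card + bi.card := by exact_mod_cast h3
    linarith
  have h := triples_lower adj σ a Z (D / 2 * (m / 2)) (fun z hz => (Finset.mem_filter.1 (Finset.mem_filter.1 hz).1).2) (by
    intro z hz
    obtain ⟨hz1, hz2⟩ := Finset.mem_filter.1 hz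
    have hza := (Finset.mem_filter.1 hz1).2
    have hzA : z ∈ A := (hadj _ _ hza).1
    have hzdeg : 3 / 4 * m ≤ ((univ.filter fun w => adj w (σ z)).card : ℝ) := by
      by_contra hlt
      exact hz2 (Finset.mem_filter.2 ⟨(hσ z).1 hzA, not_le.1 hlt⟩)
    set X := (univ.filter fun x => adj a (σ x)).filter fun x => x ∉ bo with hX
    have hXc : D / 2 ≤ (X.card : ℝ) := by
      have h1 := hdo a ha
      rw [← card_filter_perm σ (fun x => adj a x)] at h1
      have h2 : (univ.filter fun x => adj a (σ x)) ⊆ X ∪ bo := by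
        intro z hz
        by_cases hb : z ∈ bo
        · exact Finset.mem_union_right _ hb
        · exact Finset.mem_union_left _ (Finset.mem_filter.2 ⟨hz, hb⟩)
      have h3 : (univ.filter fun x => adj a (σ x)).card ≤ X.card + bo.card :=
        (Finset.card_le_card h2).trans (Finset.card_union_le _ _)
      have h4 : ((univ.filter fun x => adj a (σ x)).card : ℝ) ≤ X.card + bo.card := by exact_mod_cast h3
      linarith
    set W := (univ.filter fun w => adj (σ.symm w) (σ z)) with hW
    have hWc : 3 / 4 * m ≤ (W.card : ℝ) := by
      rw [hW, card_filter_perm σ.symm (fun x => adj x (σ z))]; exact hzdeg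
    have hWB : W ⊆ B := by
      intro w hw
      have := (hadj _ _ (Finset.mem_filter.1 hw).2).1
      have := (hσ _).1 this
      simpa using this
    have hxdeg : ∀ x ∈ X, m / 2 ≤ ((W.filter fun w => adj x w).card : ℝ) := by
      intro x hx
      obtain ⟨hx1, hx2⟩ := Finset.mem_filter.1 hx
      have hxa := (Finset.mem_filter.1 hx1).2
      have hxA : x ∈ A := (hσ x).2 (hadj _ _ hxa).2
      have hd : 3 / 4 * m ≤ ((univ.filter fun w => adj x w).card : ℝ) := by
        by_contra hlt
        exact hx2 (Finset.mem_filter.2 ⟨hxA, not_le.1 hlt⟩)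
      have hsub : W ∪ (univ.filter fun w => adj x w) ⊆ B := by
        apply Finset.union_subset hWB
        intro w hw
        exact (hadj _ _ (Finset.mem_filter.1 hw).2).2
      have hi : W.filter (fun w => adj x w) = W ∩ (univ.filter fun w => adj x w) := by
        ext w; simp
      have hu := Finset.card_union_add_card_inter W (univ.filter fun w => adj x w)
      rw [hi]
      have hu' : ((W ∪ (univ.filter fun w => adj x w)).card : ℝ) + ((W ∩ (univ.filter fun w => adj x w)).card : ℝ) = W.card + ((univ.filter fun w => adj x w).card : ℝ) := by
        exact_mod_cast hu
      have hle : ((W ∪ (univ.filter fun w => adj x w)).card : ℝ) ≤ B.card := by exact_mod_cast Finset.card_le_card hsub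
      linarith
    have h1 := Finset.card_nsmul_le_sum X (fun x => ((W.filter fun w => adj x w).card : ℝ)) (m / 2) hxdeg
    rw [nsmul_eq_mul] at h1
    have h2 := Finset.card_le_card_of_injOn (s := X.sigma fun x => W.filter fun w => adj x w)
      (t := univ.filter fun p : V × V => adj a (σ p.1) ∧ adj p.1 p.2 ∧ adj (σ.symm p.2) (σ z)) (fun s => (s.1, s.2)) (by
        rintro ⟨x, w⟩ hs
        obtain ⟨hx, hw⟩ := Finset.mem_sigma.1 (Finset.mem_coe.1 hs)
        obtain ⟨hw1, hw2⟩ := Finset.mem_filter.1 hw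
        exact Finset.mem_coe.2 (Finset.mem_filter.2 ⟨Finset.mem_univ _, (Finset.mem_filter.1 (Finset.mem_filter.1 hx).1).2, hw2, (Finset.mem_filter.1 hw1).2⟩)) (by
        rintro ⟨x, w⟩ hs ⟨x', w'⟩ hs' h
        simp only [Prod.mk.injEq] at h
        obtain ⟨rfl, rfl⟩ := h
        rfl)
    rw [Finset.card_sigma] at h2
    have h3 : ∑ x ∈ X, ((W.filter fun w => adj x w).card : ℝ) ≤ ((univ.filter fun p : V × V => adj a (σ p.1) ∧ adj p.1 p.2 ∧ adj (σ.symm p.2) (σ z)).card : ℝ) := by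
      exact_mod_cast h2
    nlinarith [mul_le_mul_of_nonneg_right hXc (by linarith : 0 ≤ m / 2)])
  have : 0 ≤ D / 2 * (m / 2) := by positivity
  nlinarith [mul_le_mul_of_nonneg_right hZc this]
end helpers

section helpers
open Finset
open scoped Classical

theorem balance {V : Type*} [Fintype V] (A0 B0 SA SB : Finset V) (hle : B0.card ≤ A0.card)
    (hSA : SA ⊆ A0) (hSB : B0 ⊆ SB) :
    ∃ A1 B1 : Finset V, SA ⊆ A1 ∧ A1 ⊆ A0 ∧ B0 ⊆ B1 ∧ B1 ⊆ SB ∧ B0.card ≤ A1.card ∧ B1.card ≤ A0.card ∧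
      B1.card ≤ A1.card ∧ (B1.card = A1.card ∨ (A1 = SA ∧ B1 = SB)) := by
  by_cases h1 : SA.card ≤ B0.card
  · obtain ⟨A1, h2, h3, h4⟩ := Finset.exists_subsuperset_card_eq hSA h1 hle
    exact ⟨A1, B0, h2, h3, Subset.rfl, hSB, h4.ge, hle, h4.ge, Or.inl h4.symm⟩
  · push Not at h1
    by_cases h2 : SA.card ≤ SB.card
    · obtain ⟨B1, h3, h4, h5⟩ := Finset.exists_subsuperset_card_eq hSB h1.le h2
      exact ⟨SA, B1, Subset.rfl, hSA, h3, h4, h1.le, h5 ▸ Finset.card_le_card hSA, h5.le, Or.inl h5⟩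
    · push Not at h2
      exact ⟨SA, SB, Subset.rfl, hSA, hSB, Subset.rfl, h1.le, h2.le.trans (Finset.card_le_card hSA), h2.le, Or.inr ⟨rfl, rfl⟩⟩

theorem colour_split {I P : Type*} [Fintype I] [Fintype P] (E : I → Finset P) (col : P → ℕ) (D ρ : ℝ)
    (hD : 0 ≤ D) (hρ0 : 0 ≤ ρ) (hρ1 : ρ ≤ 1)
    (hcol : ∀ cc, (∑ i, (((E i).filter fun p => col p = cc).card : ℝ)) ≤ D) :
    ∃ R : Finset ℕ, ∀ i, |ρ * (E i).card - (((E i).filter fun p => col p ∈ R).card : ℝ)| ≤ D := by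
  let J := {c // c ∈ (univ.image col : Finset ℕ)}
  have : Fintype J := inferInstanceAs (Fintype {c // c ∈ (univ.image col : Finset ℕ)})
  obtain ⟨y, hy, -, hy2⟩ := beck_fiala (I := I) (J := J) (fun i j => (((E i).filter fun p => col p = j.1).card : ℝ))
    (fun i j => Nat.cast_nonneg _) D hD (fun j => hcol j.1) _ (fun _ => ρ) (fun j => ⟨hρ0, hρ1⟩) rfl
  set R : Finset ℕ := (univ.filter fun j : J => y j = 1).image Subtype.val with hR
  refine ⟨R, fun i => ?_⟩
  convert hy2 i using 2
  have e0 : ∀ p : P, col p ∈ (univ.image col : Finset ℕ) := fun p => Finset.mem_image_of_mem _ (Finset.mem_univ _)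
  have e1 : ∑ j : J, (((E i).filter fun p => col p = j.1).card : ℝ) = (E i).card := by
    rw [Finset.card_eq_sum_card_fiberwise (s := E i) (f := fun p => (⟨col p, e0 p⟩ : J)) (t := univ) (fun _ _ => Finset.mem_coe.2 (Finset.mem_univ _))]
    push_cast
    refine Finset.sum_congr rfl fun j _ => ?_
    congr 2
    ext p
    simp only [Finset.mem_filter]
    rw [Subtype.ext_iff]
  have e2 : ∑ j : J, (((E i).filter fun p => col p = j.1).card : ℝ) * y j = (((E i).filter fun p => col p ∈ R).card : ℝ) := by
    rw [Finset.card_eq_sum_card_fiberwise (s := (E i).filter fun p => col p ∈ R) (f := fun p => (⟨col p, e0 p⟩ : J)) (t := univ) (fun _ _ => Finset.mem_coe.2 (Finset.mem_univ _))]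
    push_cast
    refine Finset.sum_congr rfl fun j _ => ?_
    rcases hy j with h | h
    · rw [h, mul_zero]
      symm
      rw [Nat.cast_eq_zero, Finset.card_eq_zero, Finset.filter_eq_empty_iff]
      intro p hp hpj
      have hp2 := (Finset.mem_filter.1 hp).2
      rw [hR, Finset.mem_image] at hp2
      obtain ⟨j', hj', hv⟩ := hp2
      have : j' = j := by rw [← hpj]; exact Subtype.ext hv
      rw [this] at hj'
      have := (Finset.mem_filter.1 hj').2
      rw [h] at this
      exact zero_ne_one this
    · rw [h, mul_one]
      congr 2
      ext p
      simp only [Finset.mem_filter]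
      rw [Subtype.ext_iff]
      constructor
      · rintro ⟨h1, h2⟩
        refine ⟨⟨h1, ?_⟩, h2⟩
        rw [hR, Finset.mem_image]
        exact ⟨j, Finset.mem_filter.2 ⟨Finset.mem_univ _, h⟩, h2.symm⟩
      · rintro ⟨⟨h1, -⟩, h2⟩
        exact ⟨h1, h2⟩
  rw [← e1, ← e2, Finset.mul_sum, ← Finset.sum_sub_distrib]
  exact Finset.sum_congr rfl fun j _ => by ring

theorem greedy {V : Type*} [Fintype V] (E : Finset (V × V)) (col : V × V → ℕ) (k t : ℕ) (K D : ℝ)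
    (hK0 : 0 ≤ K) (hD0 : 0 ≤ D)
    (hK : ∀ cc, ((E.filter fun p => col p = cc).card : ℝ) ≤ K)
    (hs : ∀ v, ((E.filter fun p => p.1 = v).card : ℝ) ≤ D)
    (ht : ∀ v, ((E.filter fun p => p.2 = v).card : ℝ) ≤ D)
    (hE : 0 < t → k * t * K + 2 * t * D < E.card) :
    ∃ T : Fin k × Fin t → V × V, ∀ j, T j ∈ E ∧ ∀ j', j ≠ j' → col (T j) ≠ col (T j') ∧
      (j.1 = j'.1 → (T j).1 ≠ (T j').1 ∧ (T j).2 ≠ (T j').2) := by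
  have main : ∀ J : Finset (Fin k × Fin t), ∃ T : Fin k × Fin t → Option (V × V), ∀ j ∈ J, ∃ p ∈ E, T j = some p ∧
      ∀ j' ∈ J, j ≠ j' → ∀ q, T j' = some q → col p ≠ col q ∧ (j.1 = j'.1 → p.1 ≠ q.1 ∧ p.2 ≠ q.2) := by
    intro J
    induction J using Finset.induction_on with
    | empty => exact ⟨fun _ => none, by simp⟩
    | insert j0 J hj0 ih =>
      obtain ⟨T, hT⟩ := ih
      have hE := hE (Nat.pos_of_ne_zero fun h => by subst h; exact j0.2.elim0)
      have hJc : (J.card : ℝ) ≤ k * t := by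
        have := Finset.card_le_univ J
        simp only [Fintype.card_prod, Fintype.card_fin] at this
        exact_mod_cast this
      set g : Fin k × Fin t → V × V := fun j => if h : ∃ p, T j = some p then h.choose else (Classical.choice (by
        have : E.Nonempty := by
          rw [← Finset.card_pos]
          have : (0:ℝ) < E.card := lt_of_le_of_lt (by positivity) hE
          exact_mod_cast this
        exact ⟨this.choose⟩)) with hg
      have hgT : ∀ j q, T j = some q → g j = q := by
        intro j q h
        have h' : ∃ p, T j = some p := ⟨q, h⟩
        have := h'.choose_spec
        simp only [hg, dif_pos h']
        exact Option.some.inj (this.symm.trans h)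
      set B1 := J.biUnion fun j => E.filter fun p => col p = col (g j) with hB1
      set B2 := (univ : Finset (Fin t)).biUnion fun s => (E.filter fun p => p.1 = (g (j0.1, s)).1) ∪ (E.filter fun p => p.2 = (g (j0.1, s)).2) with hB2
      have c1 : (B1.card : ℝ) ≤ k * t * K := by
        have h1 : (B1.card : ℝ) ≤ ∑ j ∈ J, ((E.filter fun p => col p = col (g j)).card : ℝ) := by
          exact_mod_cast Finset.card_biUnion_le
        have h2 := Finset.sum_le_card_nsmul J (fun j => ((E.filter fun p => col p = col (g j)).card : ℝ)) K (fun j _ => hK _)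
        rw [nsmul_eq_mul] at h2
        have := mul_le_mul_of_nonneg_right hJc hK0
        linarith
      have c2 : (B2.card : ℝ) ≤ 2 * t * D := by
        have h1 : (B2.card : ℝ) ≤ ∑ s : Fin t, (((E.filter fun p => p.1 = (g (j0.1, s)).1) ∪ (E.filter fun p => p.2 = (g (j0.1, s)).2)).card : ℝ) := by
          exact_mod_cast Finset.card_biUnion_le
        have h2 := Finset.sum_le_card_nsmul (univ : Finset (Fin t)) (fun s => (((E.filter fun p => p.1 = (g (j0.1, s)).1) ∪ (E.filter fun p => p.2 = (g (j0.1, s)).2)).card : ℝ)) (D + D) (fun s _ => by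
          have : (((E.filter fun p => p.1 = (g (j0.1, s)).1) ∪ (E.filter fun p => p.2 = (g (j0.1, s)).2)).card : ℝ) ≤ ((E.filter fun p => p.1 = (g (j0.1, s)).1).card : ℝ) + ((E.filter fun p => p.2 = (g (j0.1, s)).2).card : ℝ) := by
            exact_mod_cast Finset.card_union_le _ _
          have := hs (g (j0.1, s)).1
          have := ht (g (j0.1, s)).2
          linarith)
        rw [nsmul_eq_mul] at h2
        simp only [Finset.card_univ, Fintype.card_fin] at h2
        linarith
      have : ∃ p ∈ E, p ∉ B1 ∪ B2 := by
        by_contra hcon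
        push Not at hcon
        have h1 : E.card ≤ B1.card + B2.card := (Finset.card_le_card (fun p hp => hcon p hp)).trans (Finset.card_union_le _ _)
        have h2 : (E.card : ℝ) ≤ B1.card + B2.card := by exact_mod_cast h1
        linarith
      obtain ⟨p, hpE, hpB⟩ := this
      rw [Finset.mem_union, not_or] at hpB
      have hp1 : ∀ j ∈ J, ∀ q, T j = some q → col p ≠ col q ∧ (j0.1 = j.1 → p.1 ≠ q.1 ∧ p.2 ≠ q.2) := by
        intro j hj q hq
        have hgq := hgT j q hq
        refine ⟨fun h => hpB.1 (Finset.mem_biUnion.2 ⟨j, hj, Finset.mem_filter.2 ⟨hpE, by rw [hgq]; exact h⟩⟩), fun h => ?_⟩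
        have hjj : (j0.1, j.2) = j := by rw [h]
        constructor
        · intro h2
          exact hpB.2 (Finset.mem_biUnion.2 ⟨j.2, Finset.mem_univ _, Finset.mem_union_left _ (Finset.mem_filter.2 ⟨hpE, by rw [hjj, hgq]; exact h2⟩)⟩)
        · intro h2
          exact hpB.2 (Finset.mem_biUnion.2 ⟨j.2, Finset.mem_univ _, Finset.mem_union_right _ (Finset.mem_filter.2 ⟨hpE, by rw [hjj, hgq]; exact h2⟩)⟩)
      refine ⟨Function.update T j0 (some p), ?_⟩
      intro j hj
      rcases Finset.mem_insert.1 hj with rfl | hjJ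
      · refine ⟨p, hpE, by simp, ?_⟩
        intro j' hj' hne q hq
        rw [Function.update_of_ne (Ne.symm hne)] at hq
        exact hp1 j' (Finset.mem_of_mem_insert_of_ne hj' (Ne.symm hne)) q hq
      · have hjne : j ≠ j0 := fun h => hj0 (h ▸ hjJ)
        obtain ⟨r, hrE, hTr, hr⟩ := hT j hjJ
        refine ⟨r, hrE, by rw [Function.update_of_ne hjne]; exact hTr, ?_⟩
        intro j' hj' hne q hq
        by_cases h0 : j' = j0
        · subst h0
          rw [Function.update_self] at hq
          have hq := Option.some.inj hq
          subst hq
          obtain ⟨h1, h2⟩ := hp1 j hjJ r hTr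
          exact ⟨h1.symm, fun h => ⟨((h2 h.symm).1).symm, ((h2 h.symm).2).symm⟩⟩
        · rw [Function.update_of_ne h0] at hq
          exact hr j' (Finset.mem_of_mem_insert_of_ne hj' h0) hne q hq
  obtain ⟨T, hT⟩ := main univ
  choose f hf using fun j => hT j (Finset.mem_univ _)
  exact ⟨f, fun j => ⟨(hf j).1, fun j' hne => (hf j).2.2 j' (Finset.mem_univ _) hne _ (hf j').2.1⟩⟩

theorem cluster_side {V : Type*} [Fintype V] (adj red : V → V → Prop) (N : ℝ) (hN : 0 < N)
    (A1 B1 B : Finset V) (hB : B ⊆ B1) (hB1 : (B1.card : ℝ) ≤ B.card + N / 10 ^ 7)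
    (hBl : 45 / 100 * N ≤ B.card)
    (hdeg : ∀ v ∈ A1, N / 2000 ≤ ((B1.filter fun w => adj v w).card : ℝ))
    (hnon : ((univ.filter fun p : V × V => p.1 ∈ A1 ∧ p.2 ∈ B1 ∧ ¬ adj p.1 p.2).card : ℝ) ≤ 6 / 10 ^ 8 * N ^ 2)
    (hred : ∀ v ∈ A1, ((B1.filter fun w => adj v w ∧ red v w).card : ℝ) ≤ 1 / 16 * ((B1.filter fun w => adj v w).card : ℝ) + N / 10 ^ 20) :
    (∀ v ∈ A1, N / 4000 ≤ ((B.filter fun w => adj v w ∧ ¬ red v w).card : ℝ)) ∧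
    ((A1.filter fun v => ((B.filter fun w => adj v w ∧ ¬ red v w).card : ℝ) < 3 / 4 * B.card).card : ℝ) ≤ N / 8000 := by
  have key : ∀ v ∈ A1, 15 / 16 * ((B1.filter fun w => adj v w).card : ℝ) - N / 10 ^ 20 - N / 10 ^ 7 ≤ ((B.filter fun w => adj v w ∧ ¬ red v w).card : ℝ) := by
    intro v hv
    have h1 : (B1.filter fun w => adj v w) ⊆ ((B1.filter fun w => adj v w ∧ red v w) ∪ (B.filter fun w => adj v w ∧ ¬ red v w)) ∪ (B1 \ B) := by
      intro w hw
      simp only [Finset.mem_union, Finset.mem_filter, Finset.mem_sdiff] at hw ⊢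
      tauto
    have h2 : (B1.filter fun w => adj v w).card ≤ ((B1.filter fun w => adj v w ∧ red v w).card + (B.filter fun w => adj v w ∧ ¬ red v w).card) + (B1 \ B).card :=
      (Finset.card_le_card h1).trans ((Finset.card_union_le _ _).trans (add_le_add (Finset.card_union_le _ _) le_rfl))
    have h3 : ((B1.filter fun w => adj v w).card : ℝ) ≤ ((B1.filter fun w => adj v w ∧ red v w).card + (B.filter fun w => adj v w ∧ ¬ red v w).card) + (B1 \ B).card := by
      exact_mod_cast h2
    have h4 : ((B1 \ B).card : ℝ) = B1.card - B.card := by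
      rw [Finset.card_sdiff_of_subset hB, Nat.cast_sub (Finset.card_le_card hB)]
    have := hred v hv
    linarith
  constructor
  · intro v hv
    have := key v hv
    have := hdeg v hv
    norm_num at *
    linarith
  · set Bad := (A1.filter fun v => ((B.filter fun w => adj v w ∧ ¬ red v w).card : ℝ) < 3 / 4 * B.card) with hBad
    have h1 : ∀ v ∈ Bad, 8 / 100 * N ≤ ((B1.filter fun w => ¬ adj v w).card : ℝ) := by
      intro v hv
      obtain ⟨hvA, hv2⟩ := Finset.mem_filter.1 hv
      have := key v hvA
      have hc : ((B1.filter fun w => adj v w).card : ℝ) + ((B1.filter fun w => ¬ adj v w).card : ℝ) = B1.card := by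
        exact_mod_cast Finset.card_filter_add_card_filter_not (s := B1) (fun w => adj v w)
      have hle : (B.card : ℝ) ≤ B1.card := by exact_mod_cast Finset.card_le_card hB
      linarith
    have h2 := Finset.card_nsmul_le_sum Bad (fun v => ((B1.filter fun w => ¬ adj v w).card : ℝ)) (8 / 100 * N) h1
    rw [nsmul_eq_mul] at h2
    have h3 := Finset.card_le_card_of_injOn (s := Bad.sigma fun v => B1.filter fun w => ¬ adj v w)
      (t := (univ.filter fun p : V × V => p.1 ∈ A1 ∧ p.2 ∈ B1 ∧ ¬ adj p.1 p.2)) (fun s => (s.1, s.2)) (by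
        rintro ⟨x, w⟩ hs
        obtain ⟨hx, hw⟩ := Finset.mem_sigma.1 (Finset.mem_coe.1 hs)
        obtain ⟨hw1, hw2⟩ := Finset.mem_filter.1 hw
        exact Finset.mem_coe.2 (Finset.mem_filter.2 ⟨Finset.mem_univ _, (Finset.mem_filter.1 hx).1, hw1, hw2⟩)) (by
        rintro ⟨x, w⟩ hs ⟨x', w'⟩ hs' h
        simp only [Prod.mk.injEq] at h
        obtain ⟨rfl, rfl⟩ := h
        rfl)
    rw [Finset.card_sigma] at h3
    have h4 : ∑ x ∈ Bad, ((B1.filter fun w => ¬ adj x w).card : ℝ) ≤ ((univ.filter fun p : V × V => p.1 ∈ A1 ∧ p.2 ∈ B1 ∧ ¬ adj p.1 p.2).card : ℝ) := by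
      exact_mod_cast h3
    have h5 : (Bad.card : ℝ) * (8 / 100 * N) ≤ (N / 8000) * (8 / 100 * N) := by
      have : 0 ≤ N ^ 2 := by positivity
      nlinarith
    exact le_of_mul_le_mul_right h5 (by positivity)
end helpers

section helpers
open Finset
open scoped Classical

/-- number of arcs between two sets -/
noncomputable def cnt {V : Type*} [Fintype V] (r : V → V → Prop) (X Y : Finset V) : ℝ :=
  ((univ.filter fun p : V × V => p.1 ∈ X ∧ p.2 ∈ Y ∧ r p.1 p.2).card : ℝ)

theorem cnt_eq_sum {V : Type*} [Fintype V] (r : V → V → Prop) (X Y : Finset V) :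
    cnt r X Y = ∑ x ∈ X, ((Y.filter fun y => r x y).card : ℝ) := by
  have : (univ.filter fun p : V × V => p.1 ∈ X ∧ p.2 ∈ Y ∧ r p.1 p.2).card = (X.sigma fun x => Y.filter fun y => r x y).card := by
    symm
    apply Finset.card_bij (fun s _ => (s.1, s.2))
    · rintro ⟨x, w⟩ hs
      obtain ⟨hx, hw⟩ := Finset.mem_sigma.1 hs
      obtain ⟨hw1, hw2⟩ := Finset.mem_filter.1 hw
      exact Finset.mem_filter.2 ⟨Finset.mem_univ _, hx, hw1, hw2⟩
    · rintro ⟨x, w⟩ hs ⟨x', w'⟩ hs' h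
      simp only [Prod.mk.injEq] at h
      obtain ⟨rfl, rfl⟩ := h
      rfl
    · rintro ⟨x, w⟩ hp
      obtain ⟨h1, h2, h3⟩ := (Finset.mem_filter.1 hp).2
      exact ⟨⟨x, w⟩, Finset.mem_sigma.2 ⟨h1, Finset.mem_filter.2 ⟨h2, h3⟩⟩, rfl⟩
  rw [cnt, this, Finset.card_sigma]
  push_cast
  rfl

theorem cnt_swap {V : Type*} [Fintype V] (r : V → V → Prop) (X Y : Finset V) :
    cnt r X Y = cnt (fun x y => r y x) Y X := by
  have : (univ.filter fun p : V × V => p.1 ∈ X ∧ p.2 ∈ Y ∧ r p.1 p.2).card = (univ.filter fun p : V × V => p.1 ∈ Y ∧ p.2 ∈ X ∧ r p.2 p.1).card := by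
    apply Finset.card_bij (fun p _ => (p.2, p.1))
    · rintro ⟨x, w⟩ hp
      obtain ⟨h1, h2, h3⟩ := (Finset.mem_filter.1 hp).2
      exact Finset.mem_filter.2 ⟨Finset.mem_univ _, h2, h1, h3⟩
    · rintro ⟨x, w⟩ hs ⟨x', w'⟩ hs' h
      simp only [Prod.mk.injEq] at h
      obtain ⟨rfl, rfl⟩ := h
      rfl
    · rintro ⟨x, w⟩ hp
      obtain ⟨h1, h2, h3⟩ := (Finset.mem_filter.1 hp).2
      exact ⟨(w, x), Finset.mem_filter.2 ⟨Finset.mem_univ _, h2, h1, h3⟩, rfl⟩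
  rw [cnt, cnt, this]

theorem filt_compl {V : Type*} [Fintype V] (P : V → Prop) (Y : Finset V) :
    ((Y.filter fun y => P y).card : ℝ) + ((Yᶜ.filter fun y => P y).card : ℝ) = ((univ.filter fun y => P y).card : ℝ) := by
  have : (univ.filter fun y => P y) = (Y.filter fun y => P y) ∪ (Yᶜ.filter fun y => P y) := by
    ext y; simp only [Finset.mem_union, Finset.mem_filter, Finset.mem_compl, Finset.mem_univ]; tauto
  rw [this, Finset.card_union_of_disjoint]
  · push_cast; rfl
  · rw [Finset.disjoint_left]
    intro y h1 h2
    exact (Finset.mem_compl.1 (Finset.mem_filter.1 h2).1) (Finset.mem_filter.1 h1).1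

theorem filt_not {V : Type*} (P : V → Prop) (Y : Finset V) :
    ((Y.filter fun y => P y).card : ℝ) + ((Y.filter fun y => ¬ P y).card : ℝ) = Y.card := by
  exact_mod_cast Finset.card_filter_add_card_filter_not (s := Y) P

/-- changing the set changes degrees by little -/
theorem filt_diff {V : Type*} [Fintype V] (P : V → Prop) (Y Z : Finset V) :
    ((Y.filter fun y => P y).card : ℝ) ≤ ((Z.filter fun y => P y).card : ℝ) + ((Y \ Z).card : ℝ) := by
  have : (Y.filter fun y => P y) ⊆ (Z.filter fun y => P y) ∪ (Y \ Z) := by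
    intro y; simp only [Finset.mem_union, Finset.mem_filter, Finset.mem_sdiff]; tauto
  exact_mod_cast (Finset.card_le_card this).trans (Finset.card_union_le _ _)

theorem cnt_diff {V : Type*} [Fintype V] (r : V → V → Prop) (X Y X' Y' : Finset V) :
    cnt r X' Y' ≤ cnt r X Y + ((X' \ X).card : ℝ) * Fintype.card V + ((Y' \ Y).card : ℝ) * Fintype.card V := by
  have : (univ.filter fun p : V × V => p.1 ∈ X' ∧ p.2 ∈ Y' ∧ r p.1 p.2) ⊆
    ((univ.filter fun p : V × V => p.1 ∈ X ∧ p.2 ∈ Y ∧ r p.1 p.2) ∪ ((X' \ X) ×ˢ univ)) ∪ (univ ×ˢ (Y' \ Y)) := by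
    intro p
    simp only [Finset.mem_union, Finset.mem_filter, Finset.mem_sdiff, Finset.mem_product, Finset.mem_univ]; tauto
  have h := (Finset.card_le_card this).trans ((Finset.card_union_le _ _).trans (add_le_add (Finset.card_union_le _ _) le_rfl))
  rw [Finset.card_product, Finset.card_product, Finset.card_univ] at h
  unfold cnt
  have h' : ((univ.filter fun p : V × V => p.1 ∈ X' ∧ p.2 ∈ Y' ∧ r p.1 p.2).card : ℝ) ≤ ((univ.filter fun p : V × V => p.1 ∈ X ∧ p.2 ∈ Y ∧ r p.1 p.2).card : ℝ) + ((X' \ X).card : ℝ) * Fintype.card V + Fintype.card V * ((Y' \ Y).card : ℝ) := by exact_mod_cast h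
  linarith

theorem cnt_not_eq_sum {V : Type*} [Fintype V] (adj : V → V → Prop) (X Y : Finset V) :
    cnt (fun x y => ¬ adj x y) X Y = ∑ x ∈ X, ((Y.card : ℝ) - ((Y.filter fun y => adj x y).card : ℝ)) := by
  rw [cnt_eq_sum]
  apply Finset.sum_congr rfl
  intro x _
  rw [← filt_not (adj x) Y, add_sub_cancel_left]
  congr

theorem few_bad {V : Type*} [Fintype V] (adj : V → V → Prop) (X Y : Finset V) (N : ℝ) (hN : 0 < N)
    (hnon : cnt (fun x y => ¬ adj x y) X Y ≤ N ^ 2 / 10 ^ 9) (hY : 49 / 100 * N ≤ Y.card) :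
    ((X.filter fun a => ((Y.filter fun y => adj a y).card : ℝ) < N / 1000).card : ℝ) ≤ 4 * N / 10 ^ 9 := by
  set Bad := (X.filter fun a => ((Y.filter fun y => adj a y).card : ℝ) < N / 1000) with hBad
  rw [cnt_not_eq_sum] at hnon
  have h0 : ∀ x, ((Y.filter fun y => adj x y).card : ℝ) ≤ Y.card := by
    intro x
    exact_mod_cast Finset.card_le_card (Finset.filter_subset _ _)
  have h1 : ∑ x ∈ Bad, ((Y.card : ℝ) - ((Y.filter fun y => adj x y).card : ℝ)) ≤ ∑ x ∈ X, ((Y.card : ℝ) - ((Y.filter fun y => adj x y).card : ℝ)) :=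
    Finset.sum_le_sum_of_subset_of_nonneg (Finset.filter_subset _ _) (fun x _ _ => sub_nonneg.2 (h0 x))
  have h2 := Finset.card_nsmul_le_sum Bad (fun x => ((Y.card : ℝ) - ((Y.filter fun y => adj x y).card : ℝ))) (N / 4) (by
    intro v hv
    have := (Finset.mem_filter.1 hv).2
    linarith)
  rw [nsmul_eq_mul] at h2
  have h5 : (Bad.card : ℝ) * (N / 4) ≤ (4 * N / 10 ^ 9) * (N / 4) := by
    nlinarith
  exact le_of_mul_le_mul_right h5 (by positivity)

structure ExtStr {V : Type*} [Fintype V] (adj : V → V → Prop) (N : ℝ) (A B : Finset V) : Prop where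
  le : B.card ≤ A.card
  sA1 : N / 2 - 2 * N / 10 ^ 8 ≤ A.card
  sA2 : A.card ≤ N / 2 + 2 * N / 10 ^ 8
  sB1 : N / 2 - 2 * N / 10 ^ 8 ≤ B.card
  sB2 : B.card ≤ N / 2 + 2 * N / 10 ^ 8
  d1 : ∀ a ∈ A, N / 2000 ≤ ((B.filter fun w => adj a w).card : ℝ)
  d2 : ∀ a ∈ Aᶜ, N / 2000 ≤ ((Bᶜ.filter fun w => adj a w).card : ℝ)
  d3 : ∀ b ∈ B, N / 2000 ≤ ((A.filter fun w => adj w b).card : ℝ)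
  d4 : ∀ b ∈ Bᶜ, N / 2000 ≤ ((Aᶜ.filter fun w => adj w b).card : ℝ)
  n1 : cnt (fun x y => ¬ adj x y) A B ≤ 6 / 10 ^ 8 * N ^ 2
  n2 : cnt (fun x y => ¬ adj x y) Aᶜ Bᶜ ≤ 6 / 10 ^ 8 * N ^ 2
  cross : B.card = A.card ∨ ((∀ a ∈ A, ((Bᶜ.filter fun w => adj a w).card : ℝ) ≤ N / 500) ∧
    ∀ b ∈ Bᶜ, ((A.filter fun w => adj w b).card : ℝ) ≤ N / 500)

set_option maxHeartbeats 1000000 in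
theorem ext_aux {V : Type*} [Fintype V] (adj : V → V → Prop) (N : ℝ) (hN : 0 < N) (hNV : N = Fintype.card V)
    (X Y A0 B0 : Finset V)
    (hX1 : N / 2 - 2 * N / 10 ^ 9 ≤ X.card) (hX2 : X.card ≤ N / 2 + 2 * N / 10 ^ 9)
    (hY1 : N / 2 - 2 * N / 10 ^ 9 ≤ Y.card) (hY2 : Y.card ≤ N / 2 + 2 * N / 10 ^ 9)
    (hn1 : cnt (fun x y => ¬ adj x y) X Y ≤ N ^ 2 / 10 ^ 9)
    (hn2 : cnt (fun x y => ¬ adj x y) Xᶜ Yᶜ ≤ N ^ 2 / 10 ^ 9)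
    (hA1 : ∀ a ∈ A0, N / 1000 ≤ ((Y.filter fun w => adj a w).card : ℝ))
    (hA2 : ∀ a ∈ A0ᶜ, N / 1000 ≤ ((Yᶜ.filter fun w => adj a w).card : ℝ))
    (hB1 : ∀ b ∈ B0, N / 1000 ≤ ((X.filter fun w => adj w b).card : ℝ))
    (hB2 : ∀ b ∈ B0ᶜ, N / 1000 ≤ ((Xᶜ.filter fun w => adj w b).card : ℝ))
    (cA1 : ((A0 \ X).card : ℝ) ≤ 4 * N / 10 ^ 9) (cA2 : ((X \ A0).card : ℝ) ≤ 4 * N / 10 ^ 9)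
    (cB1 : ((B0 \ Y).card : ℝ) ≤ 4 * N / 10 ^ 9) (cB2 : ((Y \ B0).card : ℝ) ≤ 4 * N / 10 ^ 9)
    (hle : B0.card ≤ A0.card) : ∃ A B, ExtStr adj N A B := by
  obtain ⟨A, B, hSA, hAA, hBB, hSB, k1, k2, k3, hor⟩ := balance A0 B0
    (univ.filter fun a => ((Yᶜ.filter fun w => adj a w).card : ℝ) < N / 1000)
    (univ.filter fun b => N / 1000 ≤ ((X.filter fun w => adj w b).card : ℝ)) hle
    (by
      intro a ha
      have := (Finset.mem_filter.1 ha).2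
      by_contra h
      exact absurd (hA2 a (Finset.mem_compl.2 h)) (not_le.2 this))
    (by
      intro b hb
      exact Finset.mem_filter.2 ⟨Finset.mem_univ _, hB1 b hb⟩)
  have sdc : ∀ P Q : Finset V, ((P \ Q).card : ℝ) + Q.card = ((Q \ P).card : ℝ) + P.card := by
    intro P Q
    have h1 := Finset.card_sdiff_add_card P Q
    have h2 := Finset.card_sdiff_add_card Q P
    rw [Finset.union_comm] at h2
    exact_mod_cast h1.trans h2.symm
  have sdt : ∀ P Q R : Finset V, ((P \ R).card : ℝ) ≤ ((P \ Q).card : ℝ) + ((Q \ R).card : ℝ) := by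
    intro P Q R
    have : P \ R ⊆ (P \ Q) ∪ (Q \ R) := by
      intro x; simp only [Finset.mem_union, Finset.mem_sdiff]; tauto
    exact_mod_cast (Finset.card_le_card this).trans (Finset.card_union_le _ _)
  have e1 := sdc A0 X
  have e2 := sdc B0 Y
  have e3 := sdc A0 A
  have e4 := sdc B0 B
  have z1 : ((A \ A0).card : ℝ) = 0 := by rw [Finset.sdiff_eq_empty_iff_subset.2 hAA]; simp
  have z2 : ((B0 \ B).card : ℝ) = 0 := by rw [Finset.sdiff_eq_empty_iff_subset.2 hBB]; simp
  have k1' : (B0.card : ℝ) ≤ A.card := by exact_mod_cast k1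
  have k2' : (B.card : ℝ) ≤ A0.card := by exact_mod_cast k2
  have p0 : (0:ℝ) ≤ ((A0 \ X).card : ℝ) := Nat.cast_nonneg _
  have p1 : (0:ℝ) ≤ ((X \ A0).card : ℝ) := Nat.cast_nonneg _
  have p2 : (0:ℝ) ≤ ((B0 \ Y).card : ℝ) := Nat.cast_nonneg _
  have p3 : (0:ℝ) ≤ ((Y \ B0).card : ℝ) := Nat.cast_nonneg _
  have q1 : ((A0 \ A).card : ℝ) ≤ 12 * N / 10 ^ 9 := by linarith
  have q2 : ((B \ B0).card : ℝ) ≤ 12 * N / 10 ^ 9 := by linarith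
  have f1 : ((X \ A).card : ℝ) ≤ 16 * N / 10 ^ 9 := by linarith [sdt X A0 A]
  have f2 : ((A \ X).card : ℝ) ≤ 16 * N / 10 ^ 9 := by linarith [sdt A A0 X]
  have f3 : ((Y \ B).card : ℝ) ≤ 16 * N / 10 ^ 9 := by linarith [sdt Y B0 B]
  have f4 : ((B \ Y).card : ℝ) ≤ 16 * N / 10 ^ 9 := by linarith [sdt B B0 Y]
  have cc : ∀ P Q : Finset V, Pᶜ \ Qᶜ = Q \ P := by
    intro P Q; ext x; simp only [Finset.mem_sdiff, Finset.mem_compl]; tauto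
  have e5 := sdc X A
  have e6 := sdc Y B
  have p4 : (0:ℝ) ≤ ((A \ X).card : ℝ) := Nat.cast_nonneg _
  have p5 : (0:ℝ) ≤ ((X \ A).card : ℝ) := Nat.cast_nonneg _
  have p6 : (0:ℝ) ≤ ((B \ Y).card : ℝ) := Nat.cast_nonneg _
  have p7 : (0:ℝ) ≤ ((Y \ B).card : ℝ) := Nat.cast_nonneg _
  refine ⟨A, B, k3, by linarith, by linarith, by linarith, by linarith, ?_, ?_, ?_, ?_, ?_, ?_, ?_⟩
  · intro a ha
    have h1 := hA1 a (hAA ha)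
    have h2 := filt_diff (adj a) Y B
    linarith
  · intro a ha
    have h1 : N / 1000 ≤ ((Yᶜ.filter fun w => adj a w).card : ℝ) := by
      by_contra h
      exact (Finset.mem_compl.1 ha) (hSA (Finset.mem_filter.2 ⟨Finset.mem_univ _, not_le.1 h⟩))
    have h2 := filt_diff (adj a) Yᶜ Bᶜ
    rw [cc] at h2
    linarith
  · intro b hb
    have h1 := (Finset.mem_filter.1 (hSB hb)).2
    have h2 := filt_diff (fun w => adj w b) X A
    linarith
  · intro b hb
    have h1 := hB2 b (Finset.mem_compl.2 fun h => (Finset.mem_compl.1 hb) (hBB h))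
    have h2 := filt_diff (fun w => adj w b) Xᶜ Aᶜ
    rw [cc] at h2
    linarith
  · have := cnt_diff (fun x y => ¬ adj x y) X Y A B
    rw [← hNV] at this
    have g1 := mul_le_mul_of_nonneg_right f2 hN.le
    have g2 := mul_le_mul_of_nonneg_right f4 hN.le
    have g3 : (0:ℝ) ≤ N ^ 2 := sq_nonneg N
    have g4 : 16 * N / 10 ^ 9 * N = 16 / 10 ^ 9 * N ^ 2 := by ring
    rw [g4] at g1 g2
    clear * - this g1 g2 g3 hn1
    linarith
  · have := cnt_diff (fun x y => ¬ adj x y) Xᶜ Yᶜ Aᶜ Bᶜ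
    rw [← hNV, cc, cc] at this
    have g1 := mul_le_mul_of_nonneg_right f1 hN.le
    have g2 := mul_le_mul_of_nonneg_right f3 hN.le
    have g3 : (0:ℝ) ≤ N ^ 2 := sq_nonneg N
    have g4 : 16 * N / 10 ^ 9 * N = 16 / 10 ^ 9 * N ^ 2 := by ring
    rw [g4] at g1 g2
    clear * - this g1 g2 g3 hn2
    linarith
  · rcases hor with h | ⟨h1, h2⟩
    · exact Or.inl h
    · right
      constructor
      · intro a ha
        have h3 : ((Yᶜ.filter fun w => adj a w).card : ℝ) < N / 1000 := by
          rw [h1] at ha; exact (Finset.mem_filter.1 ha).2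
        have h4 := filt_diff (adj a) Bᶜ Yᶜ
        rw [cc] at h4
        linarith
      · intro b hb
        have h3 : ((X.filter fun w => adj w b).card : ℝ) < N / 1000 := by
          by_contra h
          apply Finset.mem_compl.1 hb
          rw [h2]
          exact Finset.mem_filter.2 ⟨Finset.mem_univ _, not_lt.1 h⟩
        have h4 := filt_diff (fun w => adj w b) A X
        linarith

set_option maxHeartbeats 1000000 in
theorem ext_of_sparse {V : Type*} [Fintype V] (adj : V → V → Prop) (N : ℝ) (hN : 0 < N) (hNV : N = Fintype.card V)
    (hdo : ∀ v, N / 2 ≤ ((univ.filter fun w => adj v w).card : ℝ))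
    (hdi : ∀ v, N / 2 ≤ ((univ.filter fun w => adj w v).card : ℝ))
    (X Z : Finset V) (hX : N / 2 ≤ X.card) (hZ : N / 2 ≤ Z.card)
    (hsp : cnt adj X Z ≤ N ^ 2 / 10 ^ 9) : ∃ A B, ExtStr adj N A B := by
  obtain ⟨Y, hY⟩ : ∃ Y : Finset V, Y = Zᶜ := ⟨_, rfl⟩
  have hZY : Z = Yᶜ := by rw [hY, compl_compl]
  have compc : ∀ P : Finset V, ((Pᶜ).card : ℝ) = N - P.card := by
    intro P
    rw [Finset.card_compl, Nat.cast_sub (Finset.card_le_univ P), hNV]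
  rw [hZY] at hZ hsp
  have hYc := compc Y
  have hXc := compc X
  have hs1 := hsp
  rw [cnt_eq_sum] at hs1
  have hs2 := hsp
  rw [cnt_swap, cnt_eq_sum] at hs2
  -- nonedges
  have hn1 : cnt (fun x y => ¬ adj x y) X Y ≤ N ^ 2 / 10 ^ 9 := by
    refine le_trans ?_ hs1
    rw [cnt_not_eq_sum]
    apply Finset.sum_le_sum
    intro x _
    have h2 := filt_compl (adj x) Y
    have h3 := hdo x
    linarith
  have hn2 : cnt (fun x y => ¬ adj x y) Xᶜ Yᶜ ≤ N ^ 2 / 10 ^ 9 := by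
    refine le_trans ?_ hs2
    rw [cnt_swap, cnt_not_eq_sum (fun x y => adj y x)]
    apply Finset.sum_le_sum
    intro x _
    have h2 := filt_compl (fun w => adj w x) X
    have h3 := hdi x
    linarith
  have hYl : N / 2 - 2 * N / 10 ^ 9 ≤ Y.card := by
    have h2 := Finset.card_nsmul_le_sum X (fun x => ((Yᶜ.filter fun w => adj x w).card : ℝ)) (N / 2 - Y.card) (by
      intro x _
      have h2 := filt_compl (adj x) Y
      have h1 := filt_not (adj x) Y
      have h3 := hdo x
      have h4 : (0:ℝ) ≤ ((Y.filter fun y => ¬ adj x y).card : ℝ) := Nat.cast_nonneg _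
      linarith)
    rw [nsmul_eq_mul] at h2
    have h3 : N / 2 * (N / 2 - Y.card) ≤ X.card * (N / 2 - Y.card) := mul_le_mul_of_nonneg_right hX (by linarith)
    have h4 : N / 2 * (N / 2 - Y.card) ≤ N / 2 * (2 * N / 10 ^ 9) := by nlinarith
    have := le_of_mul_le_mul_left h4 (by positivity)
    linarith
  have hXu : X.card ≤ N / 2 + 2 * N / 10 ^ 9 := by
    have h2 := Finset.card_nsmul_le_sum Yᶜ (fun x => ((X.filter fun w => adj w x).card : ℝ)) (N / 2 - (Xᶜ).card) (by
      intro x _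
      have h2 := filt_compl (fun w => adj w x) X
      have h1 := filt_not (fun w => adj w x) Xᶜ
      have h3 := hdi x
      have h4 : (0:ℝ) ≤ ((Xᶜ.filter fun y => ¬ adj y x).card : ℝ) := Nat.cast_nonneg _
      linarith)
    rw [nsmul_eq_mul] at h2
    have h3 : N / 2 * (N / 2 - (Xᶜ).card) ≤ (Yᶜ).card * (N / 2 - (Xᶜ).card) := mul_le_mul_of_nonneg_right hZ (by linarith)
    have h4 : N / 2 * (N / 2 - (Xᶜ).card) ≤ N / 2 * (2 * N / 10 ^ 9) := by nlinarith
    have := le_of_mul_le_mul_left h4 (by positivity)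
    linarith
  have hn1' := hn1
  rw [cnt_swap] at hn1'
  have hn2' := hn2
  rw [cnt_swap] at hn2'
  have b1 := few_bad adj X Y N hN hn1 (by linarith)
  have b2 := few_bad adj Xᶜ Yᶜ N hN hn2 (by linarith)
  have b3 := few_bad (fun x y => adj y x) Y X N hN hn1' (by linarith)
  have b4 := few_bad (fun x y => adj y x) Yᶜ Xᶜ N hN hn2' (by linarith)
  set A0 := univ.filter fun a => (a ∈ X ∧ N / 1000 ≤ ((Y.filter fun y => adj a y).card : ℝ)) ∨ ((Yᶜ.filter fun y => adj a y).card : ℝ) < N / 1000 with hA0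
  set B0 := univ.filter fun b => (b ∈ Y ∧ N / 1000 ≤ ((X.filter fun y => adj y b).card : ℝ)) ∨ ((Xᶜ.filter fun y => adj y b).card : ℝ) < N / 1000 with hB0
  have hA1 : ∀ a ∈ A0, N / 1000 ≤ ((Y.filter fun w => adj a w).card : ℝ) := by
    intro a ha
    rcases (Finset.mem_filter.1 ha).2 with h | h
    · exact h.2
    · have h2 := filt_compl (adj a) Y
      have h3 := hdo a
      linarith
  have hA2 : ∀ a ∈ A0ᶜ, N / 1000 ≤ ((Yᶜ.filter fun w => adj a w).card : ℝ) := by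
    intro a ha
    by_contra h
    exact (Finset.mem_compl.1 ha) (Finset.mem_filter.2 ⟨Finset.mem_univ _, Or.inr (not_le.1 h)⟩)
  have hB1 : ∀ b ∈ B0, N / 1000 ≤ ((X.filter fun w => adj w b).card : ℝ) := by
    intro a ha
    rcases (Finset.mem_filter.1 ha).2 with h | h
    · exact h.2
    · have h2 := filt_compl (fun w => adj w a) X
      have h3 := hdi a
      linarith
  have hB2 : ∀ b ∈ B0ᶜ, N / 1000 ≤ ((Xᶜ.filter fun w => adj w b).card : ℝ) := by
    intro a ha
    by_contra h
    exact (Finset.mem_compl.1 ha) (Finset.mem_filter.2 ⟨Finset.mem_univ _, Or.inr (not_le.1 h)⟩)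
  have mono : ∀ P Q : Finset V, P ⊆ Q → (Q.card : ℝ) ≤ 4 * N / 10 ^ 9 → (P.card : ℝ) ≤ 4 * N / 10 ^ 9 := by
    intro P Q h1 h2
    exact le_trans (by exact_mod_cast Finset.card_le_card h1) h2
  have cA1 : ((A0 \ X).card : ℝ) ≤ 4 * N / 10 ^ 9 := by
    refine mono _ _ ?_ b2
    intro a ha
    obtain ⟨h1, h2⟩ := Finset.mem_sdiff.1 ha
    rcases (Finset.mem_filter.1 h1).2 with h | h
    · exact absurd h.1 h2
    · exact Finset.mem_filter.2 ⟨Finset.mem_compl.2 h2, h⟩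
  have cA2 : ((X \ A0).card : ℝ) ≤ 4 * N / 10 ^ 9 := by
    refine mono _ _ ?_ b1
    intro a ha
    obtain ⟨h1, h2⟩ := Finset.mem_sdiff.1 ha
    refine Finset.mem_filter.2 ⟨h1, ?_⟩
    by_contra h
    exact h2 (Finset.mem_filter.2 ⟨Finset.mem_univ _, Or.inl ⟨h1, not_lt.1 h⟩⟩)
  have cB1 : ((B0 \ Y).card : ℝ) ≤ 4 * N / 10 ^ 9 := by
    refine mono _ _ ?_ b4
    intro a ha
    obtain ⟨h1, h2⟩ := Finset.mem_sdiff.1 ha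
    rcases (Finset.mem_filter.1 h1).2 with h | h
    · exact absurd h.1 h2
    · exact Finset.mem_filter.2 ⟨Finset.mem_compl.2 h2, h⟩
  have cB2 : ((Y \ B0).card : ℝ) ≤ 4 * N / 10 ^ 9 := by
    refine mono _ _ ?_ b3
    intro a ha
    obtain ⟨h1, h2⟩ := Finset.mem_sdiff.1 ha
    refine Finset.mem_filter.2 ⟨h1, ?_⟩
    by_contra h
    exact h2 (Finset.mem_filter.2 ⟨Finset.mem_univ _, Or.inl ⟨h1, not_lt.1 h⟩⟩)
  have cc : ∀ P Q : Finset V, Pᶜ \ Qᶜ = Q \ P := by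
    intro P Q; ext x; simp only [Finset.mem_sdiff, Finset.mem_compl]; tauto
  clear_value A0 B0
  rcases le_total B0.card A0.card with hle | hle
  · exact ext_aux adj N hN hNV X Y A0 B0 (by linarith) hXu hYl (by linarith) hn1 hn2 hA1 hA2 hB1 hB2 cA1 cA2 cB1 cB2 hle
  · apply ext_aux adj N hN hNV Xᶜ Yᶜ A0ᶜ B0ᶜ (by linarith) (by linarith) (by linarith) (by linarith) hn2
      (by rwa [compl_compl, compl_compl]) hA2 (by rwa [compl_compl, compl_compl]) hB2 (by rwa [compl_compl, compl_compl])
      (by rwa [cc]) (by rwa [cc]) (by rwa [cc]) (by rwa [cc])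
    rw [Finset.card_compl, Finset.card_compl]
    omega
end helpers

section helpers
open Finset
open scoped Classical

def PermSys {V : Type*} (adj : V → V → Prop) (col : V → V → ℕ) (k : ℕ) : Prop :=
  ∃ π : Fin k → Equiv.Perm V, (∀ i v, adj v (π i v)) ∧
    ∀ i v j w, col v (π i v) = col w (π j w) → i = j ∧ v = w

theorem permSys_nonext {V : Type*} [Fintype V] (adj : V → V → Prop) (col : V → V → ℕ) (k : ℕ) (hk : 0 < k)
    (N K : ℝ) (hNV : N = Fintype.card V) (hN : 10 ^ 12 ≤ N) (hK0 : 0 ≤ K)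
    (hK : ∀ cc, ((univ.filter fun p : V × V => adj p.1 p.2 ∧ col p.1 p.2 = cc).card : ℝ) ≤ K)
    (hkK : k * K ≤ N / 10 ^ 24)
    (hdo : ∀ v, N / 2 ≤ ((univ.filter fun w => adj v w).card : ℝ))
    (hdi : ∀ v, N / 2 ≤ ((univ.filter fun w => adj w v).card : ℝ))
    (hne : ∀ A B : Finset V, N / 2 ≤ A.card → N / 2 ≤ B.card → N ^ 2 / 10 ^ 9 ≤ cnt adj A B) :
    PermSys adj col k := by
  have : Nonempty (Fin k) := ⟨⟨0, hk⟩⟩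
  have hNp : 0 < N := by linarith
  obtain ⟨σ, hv, hc⟩ := rainbow_layers (L := Fin k) (fun _ => (univ : Finset V)) (fun _ => univ) (fun _ => adj) col
    (fun _ _ _ _ => ⟨Finset.mem_univ _, Finset.mem_univ _⟩) (fun _ => rfl) (1 / 10 ^ 10) (1 / 10 ^ 23) K
    (by norm_num) (by norm_num) (by norm_num) (by rw [← hNV]; linarith) hK0 (fun _ cc => hK cc)
    (by rw [← hNV, Fintype.card_fin]; linarith)
    (by
      intro _ σ _ a _
      have := triples_nonext adj (1 / 10 ^ 9) (by norm_num) (by rw [← hNV]; exact hdo) (by rw [← hNV]; exact hdi)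
        (by
          intro A B hA hB
          rw [← hNV] at hA hB ⊢
          have := hne A B hA hB
          unfold cnt at this
          linarith) σ a
      rw [← hNV] at this ⊢
      have h3 : 0 ≤ N ^ 3 := by positivity
      linarith)
  refine ⟨σ, fun i v => (hv i).2 v (Finset.mem_univ _), fun i v j w h => hc i v j w (Finset.mem_univ _) (Finset.mem_univ _) h⟩

theorem layer_triples {V : Type*} [Fintype V] (adj red ladj : V → V → Prop) (N : ℝ) (hN : 0 < N)
    (A1 B1 A B : Finset V) (hA : A ⊆ A1) (hB : B ⊆ B1) (hAB : A.card = B.card)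
    (hA1 : (A1.card : ℝ) ≤ A.card + N / 10 ^ 7) (hB1 : (B1.card : ℝ) ≤ B.card + N / 10 ^ 7)
    (hBl : 45 / 100 * N ≤ B.card)
    (d1 : ∀ a ∈ A1, N / 2000 ≤ ((B1.filter fun w => adj a w).card : ℝ))
    (d2 : ∀ b ∈ B1, N / 2000 ≤ ((A1.filter fun w => adj w b).card : ℝ))
    (hn : cnt (fun x y => ¬ adj x y) A1 B1 ≤ 6 / 10 ^ 8 * N ^ 2)
    (r1 : ∀ v ∈ A1, ((B1.filter fun w => adj v w ∧ red v w).card : ℝ) ≤ 1 / 16 * ((B1.filter fun w => adj v w).card : ℝ) + N / 10 ^ 20)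
    (r2 : ∀ v ∈ B1, ((A1.filter fun w => adj w v ∧ red w v).card : ℝ) ≤ 1 / 16 * ((A1.filter fun w => adj w v).card : ℝ) + N / 10 ^ 20)
    (hl : ∀ x y, ladj x y ↔ x ∈ A ∧ y ∈ B ∧ adj x y ∧ ¬ red x y)
    (σ : Equiv.Perm V) (hσ : ∀ x, x ∈ A ↔ σ x ∈ B) (a : V) (ha : a ∈ A) :
    1 / 10 ^ 10 * N ^ 3 ≤ (triples ladj σ a).card := by
  have hAB' : (A.card : ℝ) = B.card := by exact_mod_cast hAB
  obtain ⟨o1, o2⟩ := cluster_side adj red N hN A1 B1 B hB hB1 hBl d1 (by refine le_trans (le_of_eq ?_) hn; unfold cnt; congr) r1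
  obtain ⟨i1, i2⟩ := cluster_side (fun x y => adj y x) (fun x y => red y x) N hN B1 A1 A hA hA1 (by rw [hAB']; exact hBl) d2
    (by rw [cnt_swap] at hn; refine le_trans (le_of_eq ?_) hn; unfold cnt; congr) r2
  have e1 : ∀ v ∈ A, (univ.filter fun w => ladj v w) = (B.filter fun w => adj v w ∧ ¬ red v w) := by
    intro v hv
    ext w
    simp only [Finset.mem_filter, Finset.mem_univ, true_and, hl]
    tauto
  have e2 : ∀ v ∈ B, (univ.filter fun w => ladj w v) = (A.filter fun w => adj w v ∧ ¬ red w v) := by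
    intro v hv
    ext w
    simp only [Finset.mem_filter, Finset.mem_univ, true_and, hl]
    tauto
  have := triples_cluster A B ladj (fun x y h => ⟨((hl x y).1 h).1, ((hl x y).1 h).2.1⟩)
    (B.card : ℝ) (N / 4000) (by positivity) (by positivity) le_rfl
    (by intro v hv; rw [e1 v hv]; exact o1 v (hA hv))
    (by intro v hv; rw [e2 v hv]; exact i1 v (hB hv))
    (by
      refine le_trans ?_ (o2.trans (by linarith))
      refine Nat.cast_le.2 (Finset.card_le_card ?_)
      intro v hv
      obtain ⟨h1, h2⟩ := Finset.mem_filter.1 hv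
      rw [e1 v h1] at h2
      exact Finset.mem_filter.2 ⟨hA h1, h2⟩)
    (by
      refine le_trans ?_ (i2.trans (by linarith))
      refine Nat.cast_le.2 (Finset.card_le_card ?_)
      intro v hv
      obtain ⟨h1, h2⟩ := Finset.mem_filter.1 hv
      rw [e2 v h1] at h2
      rw [hAB']
      exact Finset.mem_filter.2 ⟨hB h1, h2⟩)
    σ hσ a ha
  refine le_trans ?_ this
  have h3 : 0 ≤ N ^ 3 := by positivity
  have h4 : (N / 4000 / 2) ^ 2 * (45 / 100 * N / 2) ≤ (N / 4000 / 2) ^ 2 * ((B.card : ℝ) / 2) := by gcongr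
  refine le_trans ?_ h4
  have : (N / 4000 / 2) ^ 2 * (45 / 100 * N / 2) = 45 / 200 / 8000 ^ 2 * N ^ 3 := by ring
  rw [this]
  have : (1:ℝ) / 10 ^ 10 ≤ 45 / 200 / 8000 ^ 2 := by norm_num
  exact mul_le_mul_of_nonneg_right this h3

theorem cross_lower {V : Type*} [Fintype V] (adj : V → V → Prop) (N : ℝ) (hN : 0 < N) (hNV : N = Fintype.card V)
    (hdo : ∀ v, N / 2 ≤ ((univ.filter fun w => adj v w).card : ℝ))
    (hdi : ∀ v, N / 2 ≤ ((univ.filter fun w => adj w v).card : ℝ))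
    (A B : Finset V) (h : ExtStr adj N A B) :
    ((A.card : ℝ) - B.card) * N / 5 ≤ cnt adj A Bᶜ := by
  have compc : ∀ P : Finset V, ((Pᶜ).card : ℝ) = N - P.card := by
    intro P
    rw [Finset.card_compl, Nat.cast_sub (Finset.card_le_univ P), hNV]
  have sub : ∀ (P : V → Prop) (Y : Finset V), ((Y.filter fun y => P y).card : ℝ) ≤ Y.card := by
    intro P Y
    exact_mod_cast Finset.card_le_card (Finset.filter_subset _ _)
  have hle : (B.card : ℝ) ≤ A.card := by exact_mod_cast h.le
  have s1 := h.sA1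
  have s2 := h.sB2
  have hB := compc B
  by_cases hc : ((A.card : ℝ) - B.card) / 2 ≤ N / 2 - B.card
  · rw [cnt_eq_sum]
    have h2 := Finset.card_nsmul_le_sum A (fun x => ((Bᶜ.filter fun w => adj x w).card : ℝ)) (((A.card : ℝ) - B.card) / 2) (by
      intro x _
      have h1 := filt_compl (adj x) B
      have h3 := hdo x
      have h4 := sub (adj x) B
      linarith)
    rw [nsmul_eq_mul] at h2
    refine le_trans ?_ h2
    have : (2 / 5 * N) * (((A.card : ℝ) - B.card) / 2) ≤ A.card * (((A.card : ℝ) - B.card) / 2) :=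
      mul_le_mul_of_nonneg_right (by linarith) (by linarith)
    linarith
  · rw [cnt_swap, cnt_eq_sum]
    have h2 := Finset.card_nsmul_le_sum Bᶜ (fun x => ((A.filter fun w => adj w x).card : ℝ)) (((A.card : ℝ) - B.card) / 2) (by
      intro x _
      have h1 := filt_compl (fun w => adj w x) A
      have h3 := hdi x
      have h4 := sub (fun w => adj w x) Aᶜ
      have h5 := compc A
      linarith)
    rw [nsmul_eq_mul] at h2
    refine le_trans ?_ h2
    have : (2 / 5 * N) * (((A.card : ℝ) - B.card) / 2) ≤ (Bᶜ.card : ℝ) * (((A.card : ℝ) - B.card) / 2) :=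
      mul_le_mul_of_nonneg_right (by linarith) (by linarith)
    linarith

theorem row_card {V : Type*} (s : Finset V) (f : V ↪ V × V) (Q : V × V → Prop) :
    ((s.map f).filter fun p => Q p).card = (s.filter fun w => Q (f w)).card := by
  rw [Finset.filter_map, Finset.card_map]
  congr

theorem red_set {V : Type*} [Fintype V] (adj : V → V → Prop) (col : V → V → ℕ)
    (K : ℝ) (hK0 : 0 ≤ K)
    (hK : ∀ cc, ((univ.filter fun p : V × V => adj p.1 p.2 ∧ col p.1 p.2 = cc).card : ℝ) ≤ K)
    (A B : Finset V) : ∃ R : Finset ℕ,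
      (∀ Y ∈ ({B, Bᶜ} : Set (Finset V)), ∀ v, ((Y.filter fun w => adj v w ∧ col v w ∈ R).card : ℝ) ≤ 1 / 16 * ((Y.filter fun w => adj v w).card : ℝ) + 5 * K) ∧
      (∀ X ∈ ({A, Aᶜ} : Set (Finset V)), ∀ v, ((X.filter fun w => adj w v ∧ col w v ∈ R).card : ℝ) ≤ 1 / 16 * ((X.filter fun w => adj w v).card : ℝ) + 5 * K) ∧
      1 / 16 * cnt adj A Bᶜ - 5 * K ≤ cnt (fun x y => adj x y ∧ col x y ∈ R) A Bᶜ := by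
  let fo : V → V ↪ V × V := fun v => ⟨fun w => (v, w), fun _ _ h => (Prod.ext_iff.1 h).2⟩
  let fi : V → V ↪ V × V := fun v => ⟨fun w => (w, v), fun _ _ h => (Prod.ext_iff.1 h).1⟩
  let ro : Finset V → V → Finset (V × V) := fun Y v => (Y.filter fun w => adj v w).map (fo v)
  let ri : Finset V → V → Finset (V × V) := fun X v => (X.filter fun w => adj w v).map (fi v)
  let cr : Finset (V × V) := univ.filter fun p : V × V => p.1 ∈ A ∧ p.2 ∈ Bᶜ ∧ adj p.1 p.2
  have hro : ∀ (Q : V × V → Prop) Y v, ((ro Y v).filter fun p => Q p).card = (Y.filter fun w => adj v w ∧ Q (v, w)).card := by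
    intro Q Y v
    rw [row_card, Finset.filter_filter]
    rfl
  have hri : ∀ (Q : V × V → Prop) X v, ((ri X v).filter fun p => Q p).card = (X.filter fun w => adj w v ∧ Q (w, v)).card := by
    intro Q Y v
    rw [row_card, Finset.filter_filter]
    rfl
  have hcr : ∀ Q : V × V → Prop, ((cr.filter fun p => Q p).card : ℝ) = cnt (fun x y => adj x y ∧ Q (x, y)) A Bᶜ := by
    intro Q
    unfold cnt
    congr 1
    apply congrArg
    ext p
    simp only [cr, Finset.mem_filter, Finset.mem_univ, true_and]
    tauto
  have cntK : ∀ cc X Y, cnt (fun x y => adj x y ∧ col x y = cc) X Y ≤ K := by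
    intro cc X Y
    refine le_trans ?_ (hK cc)
    unfold cnt
    refine Nat.cast_le.2 (Finset.card_le_card ?_)
    intro p hp
    simp only [Finset.mem_filter, Finset.mem_univ, true_and] at hp ⊢
    exact hp.2.2
  obtain ⟨R, hR⟩ := colour_split (I := V ⊕ V ⊕ V ⊕ V ⊕ Unit)
    (Sum.elim (ro B) (Sum.elim (ro Bᶜ) (Sum.elim (ri A) (Sum.elim (ri Aᶜ) (fun _ => cr)))))
    (fun p => col p.1 p.2) (5 * K) (1 / 16) (by positivity) (by norm_num) (by norm_num)
    (by
      intro cc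
      rw [Fintype.sum_sum_type, Fintype.sum_sum_type, Fintype.sum_sum_type, Fintype.sum_sum_type]
      simp only [Sum.elim_inl, Sum.elim_inr]
      have ho : ∀ Y : Finset V, ∑ v, (((ro Y v).filter fun p => col p.1 p.2 = cc).card : ℝ) ≤ K := by
        intro Y
        have := cntK cc univ Y
        rw [cnt_eq_sum] at this
        refine le_trans (le_of_eq ?_) this
        apply Finset.sum_congr rfl
        intro v _
        refine congrArg Nat.cast ?_
        convert hro (fun p => col p.1 p.2 = cc) Y v
      have hi : ∀ Y : Finset V, ∑ v, (((ri Y v).filter fun p => col p.1 p.2 = cc).card : ℝ) ≤ K := by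
        intro Y
        have := cntK cc Y univ
        rw [cnt_swap, cnt_eq_sum] at this
        refine le_trans (le_of_eq ?_) this
        apply Finset.sum_congr rfl
        intro v _
        refine congrArg Nat.cast ?_
        convert hri (fun p => col p.1 p.2 = cc) Y v
      have hc : ∑ _v : Unit, ((cr.filter fun p => col p.1 p.2 = cc).card : ℝ) ≤ K := by
        rw [Fintype.sum_unique]
        refine le_trans (le_of_eq ?_) (cntK cc A Bᶜ)
        convert hcr (fun p => col p.1 p.2 = cc)
      linarith [ho B, ho Bᶜ, hi A, hi Aᶜ])
  refine ⟨R, ?_, ?_, ?_⟩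
  · intro Y hY v
    have key : |1 / 16 * ((ro Y v).card : ℝ) - (((ro Y v).filter fun p => col p.1 p.2 ∈ R).card : ℝ)| ≤ 5 * K := by
      rcases hY with rfl | rfl
      · exact hR (Sum.inl v)
      · exact hR (Sum.inr (Sum.inl v))
    have e : ((ro Y v).filter fun p => col p.1 p.2 ∈ R).card = (Y.filter fun w => adj v w ∧ col v w ∈ R).card := by
      convert hro (fun p => col p.1 p.2 ∈ R) Y v
    rw [e] at key
    have h1 : (ro Y v).card = (Y.filter fun w => adj v w).card := Finset.card_map _
    rw [h1] at key
    have := (abs_le.1 key).1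
    linarith
  · intro Y hY v
    have key : |1 / 16 * ((ri Y v).card : ℝ) - (((ri Y v).filter fun p => col p.1 p.2 ∈ R).card : ℝ)| ≤ 5 * K := by
      rcases hY with rfl | rfl
      · exact hR (Sum.inr (Sum.inr (Sum.inl v)))
      · exact hR (Sum.inr (Sum.inr (Sum.inr (Sum.inl v))))
    have e : ((ri Y v).filter fun p => col p.1 p.2 ∈ R).card = (Y.filter fun w => adj w v ∧ col w v ∈ R).card := by
      convert hri (fun p => col p.1 p.2 ∈ R) Y v
    rw [e] at key
    have h1 : (ri Y v).card = (Y.filter fun w => adj w v).card := Finset.card_map _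
    rw [h1] at key
    have := (abs_le.1 key).1
    linarith
  · have key : |1 / 16 * (cr.card : ℝ) - ((cr.filter fun p => col p.1 p.2 ∈ R).card : ℝ)| ≤ 5 * K :=
      hR (Sum.inr (Sum.inr (Sum.inr (Sum.inr ()))))
    have e : ((cr.filter fun p => col p.1 p.2 ∈ R).card : ℝ) = cnt (fun x y => adj x y ∧ col x y ∈ R) A Bᶜ := by
      convert hcr (fun p => col p.1 p.2 ∈ R)
    rw [e] at key
    have h1 : (cr.card : ℝ) = cnt adj A Bᶜ := rfl
    rw [h1] at key
    have := (abs_le.1 key).2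
    linarith
end helpers

section helpers
open Finset
open scoped Classical

theorem transversal {V : Type*} [Fintype V] (adj : V → V → Prop) (col : V → V → ℕ) (k : ℕ) (hk : 0 < k)
    (N K : ℝ) (hNV : N = Fintype.card V) (hN : 10 ^ 12 ≤ N) (hK0 : 0 ≤ K)
    (hK : ∀ cc, ((univ.filter fun p : V × V => adj p.1 p.2 ∧ col p.1 p.2 = cc).card : ℝ) ≤ K)
    (hkK : k * K ≤ N / 10 ^ 24)
    (hdo : ∀ v, N / 2 ≤ ((univ.filter fun w => adj v w).card : ℝ))
    (hdi : ∀ v, N / 2 ≤ ((univ.filter fun w => adj w v).card : ℝ))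
    (A B : Finset V) (h : ExtStr adj N A B) (R : Finset ℕ)
    (hR : 1 / 16 * cnt adj A Bᶜ - 5 * K ≤ cnt (fun x y => adj x y ∧ col x y ∈ R) A Bᶜ) (t : ℕ) (ht : A.card = B.card + t) :
    ∃ T : Fin k × Fin t → V × V, ∀ j, ((T j).1 ∈ A ∧ (T j).2 ∉ B ∧ adj (T j).1 (T j).2 ∧ col (T j).1 (T j).2 ∈ R) ∧
      ∀ j', j ≠ j' → col (T j).1 (T j).2 ≠ col (T j').1 (T j').2 ∧
        (j.1 = j'.1 → (T j).1 ≠ (T j').1 ∧ (T j).2 ≠ (T j').2) := by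
  rcases Nat.eq_zero_or_pos t with rfl | htp
  · exact ⟨fun j => j.2.elim0, fun j => j.2.elim0⟩
  have hNp : 0 < N := by linarith
  have hcl := cross_lower adj N hNp hNV hdo hdi A B h
  have htc : (A.card : ℝ) - B.card = t := by rw [ht]; push_cast; ring
  rw [htc] at hcl
  obtain ⟨c1, c2⟩ := h.cross.resolve_left (by omega)
  have ht1 : (1:ℝ) ≤ t := by exact_mod_cast htp
  have hk1 : (1:ℝ) ≤ k := by exact_mod_cast hk
  have hKk : K ≤ k * K := by nlinarith
  obtain ⟨E, hE, hEc⟩ : ∃ E : Finset (V × V), (∀ p, p ∈ E ↔ p.1 ∈ A ∧ p.2 ∈ Bᶜ ∧ adj p.1 p.2 ∧ col p.1 p.2 ∈ R) ∧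
      (E.card : ℝ) = cnt (fun x y => adj x y ∧ col x y ∈ R) A Bᶜ := by
    refine ⟨_, ?_, rfl⟩
    intro p
    simp only [Finset.mem_filter, Finset.mem_univ, true_and]
  rw [← hEc] at hR
  obtain ⟨T, hT⟩ := greedy E (fun p => col p.1 p.2) k t K (N / 500) hK0 (by positivity)
    (by
      intro cc
      refine le_trans (Nat.cast_le.2 (Finset.card_le_card ?_)) (hK cc)
      intro p hp
      simp only [Finset.mem_filter, Finset.mem_univ, true_and, hE] at hp ⊢
      exact ⟨hp.1.2.2.1, hp.2⟩)
    (by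
      intro v
      by_cases hv : v ∈ A
      · refine le_trans (Nat.cast_le.2 ?_) (c1 v hv)
        apply Finset.card_le_card_of_injOn (fun p => p.2)
        · intro p hp
          simp only [Finset.mem_coe, Finset.mem_filter, hE] at hp ⊢
          obtain ⟨⟨_, q2, q3, _⟩, rfl⟩ := hp
          exact ⟨q2, q3⟩
        · intro p hp q hq hpq
          simp only [Finset.mem_coe, Finset.mem_filter] at hp hq
          exact Prod.ext (hp.2.trans hq.2.symm) hpq
      · have : (E.filter fun p => p.1 = v) = ∅ := by
          apply Finset.filter_eq_empty_iff.2
          rintro p hp rfl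
          exact hv ((hE p).1 hp).1
        rw [this]
        simp only [Finset.card_empty, Nat.cast_zero]
        positivity)
    (by
      intro v
      by_cases hv : v ∈ Bᶜ
      · refine le_trans (Nat.cast_le.2 ?_) (c2 v hv)
        apply Finset.card_le_card_of_injOn (fun p => p.1)
        · intro p hp
          simp only [Finset.mem_coe, Finset.mem_filter, hE] at hp ⊢
          obtain ⟨⟨q1, _, q3, _⟩, rfl⟩ := hp
          exact ⟨q1, q3⟩
        · intro p hp q hq hpq
          simp only [Finset.mem_coe, Finset.mem_filter] at hp hq
          exact Prod.ext hpq (hp.2.trans hq.2.symm)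
      · have : (E.filter fun p => p.2 = v) = ∅ := by
          apply Finset.filter_eq_empty_iff.2
          rintro p hp rfl
          exact hv ((hE p).1 hp).2.1
        rw [this]
        simp only [Finset.card_empty, Nat.cast_zero]
        positivity)
    (by
      intro _
      have g1 : (k:ℝ) * t * K ≤ t * (N / 10 ^ 24) := by
        have := mul_le_mul_of_nonneg_left hkK (by linarith : (0:ℝ) ≤ t)
        linarith
      have g2 : N ≤ t * N := by nlinarith
      have g3 : 0 < t * N := by linarith
      linarith)
  refine ⟨T, fun j => ⟨?_, (hT j).2⟩⟩
  obtain ⟨q1, q2, q3, q4⟩ := (hE _).1 (hT j).1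
  exact ⟨q1, Finset.mem_compl.1 q2, q3, q4⟩

theorem assemble {V : Type*} [Fintype V] (adj : V → V → Prop) (col : V → V → ℕ) (k t : ℕ)
    (A B : Finset V) (R : Finset ℕ) (T : Fin k × Fin t → V × V)
    (hT : ∀ j, ((T j).1 ∈ A ∧ (T j).2 ∉ B ∧ adj (T j).1 (T j).2 ∧ col (T j).1 (T j).2 ∈ R) ∧
      ∀ j', j ≠ j' → col (T j).1 (T j).2 ≠ col (T j').1 (T j').2 ∧
        (j.1 = j'.1 → (T j).1 ≠ (T j').1 ∧ (T j).2 ≠ (T j').2))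
    (σ : Fin k × Bool → Equiv.Perm V)
    (s1 : ∀ i x, (x ∈ A ∧ ∀ s, (T (i, s)).1 ≠ x) → σ (i, true) x ∈ B ∧ adj x (σ (i, true) x) ∧ col x (σ (i, true) x) ∉ R)
    (s2 : ∀ i x, x ∉ A → (σ (i, false) x ∉ B ∧ ∀ s, (T (i, s)).2 ≠ σ (i, false) x) ∧ adj x (σ (i, false) x) ∧ col x (σ (i, false) x) ∉ R)
    (hc : ∀ l x l' x', ((l.2 = true ∧ x ∈ A ∧ ∀ s, (T (l.1, s)).1 ≠ x) ∨ (l.2 = false ∧ x ∉ A)) →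
      ((l'.2 = true ∧ x' ∈ A ∧ ∀ s, (T (l'.1, s)).1 ≠ x') ∨ (l'.2 = false ∧ x' ∉ A)) →
      col x (σ l x) = col x' (σ l' x') → l = l' ∧ x = x') : PermSys adj col k := by
  have hex : ∀ i v, ∃ w, (∃ s, T (i, s) = (v, w)) ∨
      ((v ∈ A ∧ ∀ s, (T (i, s)).1 ≠ v) ∧ w = σ (i, true) v) ∨ (v ∉ A ∧ w = σ (i, false) v) := by
    intro i v
    by_cases hv : v ∈ A
    · by_cases hs : ∃ s, (T (i, s)).1 = v
      · obtain ⟨s, hs⟩ := hs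
        exact ⟨(T (i, s)).2, Or.inl ⟨s, Prod.ext hs rfl⟩⟩
      · exact ⟨_, Or.inr (Or.inl ⟨⟨hv, fun s h => hs ⟨s, h⟩⟩, rfl⟩)⟩
    · exact ⟨_, Or.inr (Or.inr ⟨hv, rfl⟩)⟩
  choose f hf using hex
  have hadj : ∀ i v, adj v (f i v) := by
    intro i v
    rcases hf i v with ⟨s, hs⟩ | ⟨h1, h2⟩ | ⟨h1, h2⟩
    · have := (hT (i, s)).1.2.2.1
      rw [hs] at this
      exact this
    · rw [h2]; exact (s1 i v h1).2.1
    · rw [h2]; exact (s2 i v h1).2.1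
  have red : ∀ i v s, T (i, s) = (v, f i v) → col v (f i v) ∈ R := by
    intro i v s hs
    have := (hT (i, s)).1.2.2.2
    rw [hs] at this
    exact this
  have hcol : ∀ i v j w, col v (f i v) = col w (f j w) → i = j ∧ v = w := by
    intro i v j w h
    rcases hf i v with ⟨s, hs⟩ | ⟨h1, h2⟩ | ⟨h1, h2⟩ <;> rcases hf j w with ⟨s', hs'⟩ | ⟨h1', h2'⟩ | ⟨h1', h2'⟩
    · by_cases he : (i, s) = (j, s')
      · obtain ⟨rfl, rfl⟩ := Prod.ext_iff.1 he
        simp only at hs hs'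
        rw [hs] at hs'
        exact ⟨rfl, (Prod.ext_iff.1 hs').1⟩
      · have := ((hT (i, s)).2 (j, s') he).1
        rw [hs, hs'] at this
        exact absurd h this
    · have h3 := red i v s hs
      rw [h, h2'] at h3
      exact absurd h3 (s1 j w h1').2.2
    · have h3 := red i v s hs
      rw [h, h2'] at h3
      exact absurd h3 (s2 j w h1').2.2
    · have h3 := red j w s' hs'
      rw [← h, h2] at h3
      exact absurd h3 (s1 i v h1).2.2
    · rw [h2, h2'] at h
      have := hc (i, true) v (j, true) w (Or.inl ⟨rfl, h1⟩) (Or.inl ⟨rfl, h1'⟩) h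
      exact ⟨(Prod.ext_iff.1 this.1).1, this.2⟩
    · rw [h2, h2'] at h
      have := hc (i, true) v (j, false) w (Or.inl ⟨rfl, h1⟩) (Or.inr ⟨rfl, h1'⟩) h
      exact ⟨(Prod.ext_iff.1 this.1).1, this.2⟩
    · have h3 := red j w s' hs'
      rw [← h, h2] at h3
      exact absurd h3 (s2 i v h1).2.2
    · rw [h2, h2'] at h
      have := hc (i, false) v (j, true) w (Or.inr ⟨rfl, h1⟩) (Or.inl ⟨rfl, h1'⟩) h
      exact ⟨(Prod.ext_iff.1 this.1).1, this.2⟩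
    · rw [h2, h2'] at h
      have := hc (i, false) v (j, false) w (Or.inr ⟨rfl, h1⟩) (Or.inr ⟨rfl, h1'⟩) h
      exact ⟨(Prod.ext_iff.1 this.1).1, this.2⟩
  have tB : ∀ i v s, T (i, s) = (v, f i v) → f i v ∉ B := by
    intro i v s hs
    have := (hT (i, s)).1.2.1
    rw [hs] at this
    exact this
  have hinj : ∀ i, Function.Injective (f i) := by
    intro i v w h
    rcases hf i v with ⟨s, hs⟩ | ⟨h1, h2⟩ | ⟨h1, h2⟩ <;> rcases hf i w with ⟨s', hs'⟩ | ⟨h1', h2'⟩ | ⟨h1', h2'⟩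
    · by_cases he : (i, s) = (i, s')
      · obtain ⟨_, rfl⟩ := Prod.ext_iff.1 he
        simp only at hs hs'
        rw [hs] at hs'
        exact (Prod.ext_iff.1 hs').1
      · have := (((hT (i, s)).2 (i, s') he).2 rfl).2
        rw [hs, hs'] at this
        exact absurd h this
    · exfalso
      have h3 := tB i v s hs
      rw [h, h2'] at h3
      exact h3 (s1 i w h1').1
    · exfalso
      apply (s2 i w h1').1.2 s
      rw [hs, ← h2', ← h]
    · exfalso
      have h3 := tB i w s' hs'
      rw [← h, h2] at h3
      exact h3 (s1 i v h1).1
    · rw [h2, h2'] at h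
      exact (σ _).injective h
    · rw [h2, h2'] at h
      exact absurd (h ▸ (s1 i v h1).1) (s2 i w h1').1.1
    · exfalso
      apply (s2 i v h1).1.2 s'
      rw [hs', ← h2, ← h]
    · rw [h2, h2'] at h
      exact absurd (h.symm ▸ (s1 i w h1').1) (s2 i v h1).1.1
    · rw [h2, h2'] at h
      exact (σ _).injective h
  exact ⟨fun i => Equiv.ofBijective (f i) (Finite.injective_iff_bijective.1 (hinj i)), hadj, hcol⟩

set_option maxHeartbeats 1000000 in
theorem permSys_ext {V : Type*} [Fintype V] (adj : V → V → Prop) (col : V → V → ℕ) (k : ℕ) (hk : 0 < k)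
    (N K : ℝ) (hNV : N = Fintype.card V) (hN : 10 ^ 12 ≤ N) (hK0 : 0 ≤ K)
    (hK : ∀ cc, ((univ.filter fun p : V × V => adj p.1 p.2 ∧ col p.1 p.2 = cc).card : ℝ) ≤ K)
    (hkK : k * K ≤ N / 10 ^ 24)
    (hdo : ∀ v, N / 2 ≤ ((univ.filter fun w => adj v w).card : ℝ))
    (hdi : ∀ v, N / 2 ≤ ((univ.filter fun w => adj w v).card : ℝ))
    (A B : Finset V) (h : ExtStr adj N A B) : PermSys adj col k := by
  have hNp : 0 < N := by linarith
  have hk1 : (1:ℝ) ≤ k := by exact_mod_cast hk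
  have hKk : K ≤ k * K := by nlinarith
  have hK5 : 5 * K ≤ N / 10 ^ 20 := by linarith
  obtain ⟨R, r1, r2, r3⟩ := red_set adj col K hK0 hK A B
  obtain ⟨t, ht⟩ := Nat.exists_eq_add_of_le h.le
  obtain ⟨T, hT⟩ := transversal adj col k hk N K hNV hN hK0 hK hkK hdo hdi A B h R r3 t ht
  have compc : ∀ P : Finset V, ((Pᶜ).card : ℝ) = N - P.card := by
    intro P
    rw [Finset.card_compl, Nat.cast_sub (Finset.card_le_univ P), hNV]
  have htr : (A.card : ℝ) = B.card + t := by exact_mod_cast ht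
  have htN : (t : ℝ) ≤ N / 10 ^ 7 := by
    have := h.sA2
    have := h.sB1
    linarith
  have ht0 : (0:ℝ) ≤ t := Nat.cast_nonneg _
  -- sources and targets
  obtain ⟨P, hP⟩ : ∃ P : Fin k → Finset V, ∀ i, P i = univ.image fun s => (T (i, s)).1 := ⟨_, fun _ => rfl⟩
  obtain ⟨Q, hQ⟩ : ∃ Q : Fin k → Finset V, ∀ i, Q i = univ.image fun s => (T (i, s)).2 := ⟨_, fun _ => rfl⟩
  have hPm : ∀ i x, x ∈ P i ↔ ∃ s, (T (i, s)).1 = x := by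
    intro i x; rw [hP]; simp only [Finset.mem_image, Finset.mem_univ, true_and]
  have hQm : ∀ i x, x ∈ Q i ↔ ∃ s, (T (i, s)).2 = x := by
    intro i x; rw [hQ]; simp only [Finset.mem_image, Finset.mem_univ, true_and]
  have hPc : ∀ i, (P i).card = t := by
    intro i
    rw [hP, Finset.card_image_of_injective, Finset.card_univ, Fintype.card_fin]
    intro s s' hs
    by_contra hne
    exact (((hT (i, s)).2 (i, s') (fun he => hne (Prod.ext_iff.1 he).2)).2 rfl).1 hs
  have hQc : ∀ i, (Q i).card = t := by
    intro i
    rw [hQ, Finset.card_image_of_injective, Finset.card_univ, Fintype.card_fin]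
    intro s s' hs
    by_contra hne
    exact (((hT (i, s)).2 (i, s') (fun he => hne (Prod.ext_iff.1 he).2)).2 rfl).2 hs
  have hPA : ∀ i, P i ⊆ A := by
    intro i x hx
    obtain ⟨s, rfl⟩ := (hPm i x).1 hx
    exact (hT (i, s)).1.1
  have hQB : ∀ i, Q i ⊆ Bᶜ := by
    intro i x hx
    obtain ⟨s, rfl⟩ := (hQm i x).1 hx
    exact Finset.mem_compl.2 (hT (i, s)).1.2.1
  have cP : ∀ i, (A \ P i).card = B.card := by
    intro i
    have := Finset.card_sdiff_add_card_eq_card (hPA i)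
    rw [hPc] at this
    omega
  have cQ : ∀ i, Aᶜ.card = (Bᶜ \ Q i).card := by
    intro i
    have := Finset.card_sdiff_add_card_eq_card (hQB i)
    rw [hQc] at this
    have h1 := Finset.card_add_card_compl A
    have h2 := Finset.card_add_card_compl B
    omega
  let LA : Fin k × Bool → Finset V := fun l => if l.2 = true then A \ P l.1 else Aᶜ
  let LB : Fin k × Bool → Finset V := fun l => if l.2 = true then B else Bᶜ \ Q l.1
  have LAt : ∀ i, LA (i, true) = A \ P i := fun i => if_pos rfl
  have LBt : ∀ i, LB (i, true) = B := fun i => if_pos rfl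
  have LAf : ∀ i, LA (i, false) = Aᶜ := fun i => if_neg (by simp)
  have LBf : ∀ i, LB (i, false) = Bᶜ \ Q i := fun i => if_neg (by simp)
  obtain ⟨ladj, hl⟩ : ∃ ladj : Fin k × Bool → V → V → Prop, ∀ l x y, ladj l x y ↔
    x ∈ LA l ∧ y ∈ LB l ∧ adj x y ∧ ¬ col x y ∈ R := ⟨_, fun _ _ _ => Iff.rfl⟩
  have : Nonempty (Fin k × Bool) := ⟨(⟨0, hk⟩, true)⟩
  obtain ⟨σ, hv, hc⟩ := rainbow_layers LA LB ladj col
    (fun l x y hxy => ⟨((hl l x y).1 hxy).1, ((hl l x y).1 hxy).2.1⟩)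
    (by
      rintro ⟨i, b⟩
      cases b
      · rw [LAf, LBf]; exact cQ i
      · rw [LAt, LBt]; exact cP i) (1 / 10 ^ 10) (1 / 10 ^ 23) K
    (by norm_num) (by norm_num) (by norm_num) (by rw [← hNV]; linarith) hK0
    (by
      intro l cc
      refine le_trans (Nat.cast_le.2 (Finset.card_le_card ?_)) (hK cc)
      intro p hp
      simp only [Finset.mem_filter, Finset.mem_univ, true_and, hl] at hp ⊢
      exact ⟨hp.1.2.2.1, hp.2⟩)
    (by
      rw [← hNV, Fintype.card_prod, Fintype.card_fin, Fintype.card_bool]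
      push_cast
      linarith)
    (by
      rintro ⟨i, b⟩ σ hσ a ha
      rw [← hNV]
      have hQr : ((Bᶜ \ Q i).card : ℝ) = N - A.card := by rw [← cQ i, compc]
      have hPr : ((A \ P i).card : ℝ) = B.card := by rw [cP i]
      have := h.sA2
      have := h.sB1
      have := compc B
      cases b
      · refine layer_triples adj (fun x y => col x y ∈ R) (ladj (i, false)) N hNp Aᶜ Bᶜ (LA (i, false)) (LB (i, false))
          ?_ ?_ ?_ ?_ ?_ ?_ h.d2 h.d4 h.n2 ?_ ?_ (hl _) σ hσ a ha
        · rw [LAf]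
        · rw [LBf]; exact Finset.sdiff_subset
        · rw [LAf, LBf]; exact cQ i
        · rw [LAf]; linarith
        · rw [LBf]; linarith
        · rw [LBf]; linarith
        · intro v _
          have := r1 Bᶜ (by simp) v
          refine le_trans (le_trans (le_of_eq ?_) this) (add_le_add le_rfl hK5)
          congr
        · intro v _
          have := r2 Aᶜ (by simp) v
          refine le_trans (le_trans (le_of_eq ?_) this) (add_le_add le_rfl hK5)
          congr
      · refine layer_triples adj (fun x y => col x y ∈ R) (ladj (i, true)) N hNp A B (LA (i, true)) (LB (i, true))
          ?_ ?_ ?_ ?_ ?_ ?_ h.d1 h.d3 h.n1 ?_ ?_ (hl _) σ hσ a ha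
        · rw [LAt]; exact Finset.sdiff_subset
        · rw [LBt]
        · rw [LAt, LBt]; exact cP i
        · rw [LAt]; linarith
        · rw [LBt]; linarith
        · rw [LBt]; linarith
        · intro v _
          have := r1 B (by simp) v
          refine le_trans (le_trans (le_of_eq ?_) this) (add_le_add le_rfl hK5)
          congr
        · intro v _
          have := r2 A (by simp) v
          refine le_trans (le_trans (le_of_eq ?_) this) (add_le_add le_rfl hK5)
          congr)
  have mt : ∀ i x, x ∈ LA (i, true) ↔ (x ∈ A ∧ ∀ s, (T (i, s)).1 ≠ x) := by
    intro i x
    rw [LAt, Finset.mem_sdiff, hPm, not_exists]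
  have mf : ∀ i x, x ∈ LA (i, false) ↔ x ∉ A := by
    intro i x
    rw [LAf, Finset.mem_compl]
  have mem : ∀ l x, ((l.2 = true ∧ x ∈ A ∧ ∀ s, (T (l.1, s)).1 ≠ x) ∨ (l.2 = false ∧ x ∉ A)) → x ∈ LA l := by
    rintro ⟨i, b⟩ x hx
    rcases hx with ⟨h1, h2⟩ | ⟨h1, h2⟩
    · simp only at h1
      subst h1
      exact (mt i x).2 h2
    · simp only at h1
      subst h1
      exact (mf i x).2 h2
  refine assemble adj col k t A B R T hT σ ?_ ?_ ?_
  · intro i x hx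
    have h1 := (hl _ _ _).1 ((hv (i, true)).2 x ((mt i x).2 hx))
    rw [LBt] at h1
    exact h1.2
  · intro i x hx
    have h1 := (hl _ _ _).1 ((hv (i, false)).2 x ((mf i x).2 hx))
    rw [LBf, Finset.mem_sdiff, Finset.mem_compl, hQm, not_exists] at h1
    exact h1.2
  · intro l x l' x' hx hx' he
    exact hc l x l' x' (mem l x hx) (mem l' x' hx') he

theorem permSys_dirac {V : Type*} [Fintype V] (adj : V → V → Prop) (col : V → V → ℕ) (k : ℕ) (hk : 0 < k)
    (N K : ℝ) (hNV : N = Fintype.card V) (hN : 10 ^ 12 ≤ N) (hK0 : 0 ≤ K)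
    (hK : ∀ cc, ((univ.filter fun p : V × V => adj p.1 p.2 ∧ col p.1 p.2 = cc).card : ℝ) ≤ K)
    (hkK : k * K ≤ N / 10 ^ 24)
    (hdo : ∀ v, N / 2 ≤ ((univ.filter fun w => adj v w).card : ℝ))
    (hdi : ∀ v, N / 2 ≤ ((univ.filter fun w => adj w v).card : ℝ)) : PermSys adj col k := by
  by_cases hne : ∀ A B : Finset V, N / 2 ≤ A.card → N / 2 ≤ B.card → N ^ 2 / 10 ^ 9 ≤ cnt adj A B
  · exact permSys_nonext adj col k hk N K hNV hN hK0 hK hkK hdo hdi hne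
  · push Not at hne
    obtain ⟨X, Z, hX, hZ, hsp⟩ := hne
    obtain ⟨A, B, h⟩ := ext_of_sparse adj N (by linarith) hNV hdo hdi X Z hX hZ hsp.le
    exact permSys_ext adj col k hk N K hNV hN hK0 hK hkK hdo hdi A B h
end helpers

section helpers
open Finset
open scoped Classical

theorem arcs_le {V : Type*} [Fintype V] (G : SimpleGraph V) (χ : Sym2 V → ℕ) (c : ℕ) :
    ((univ.filter fun p : V × V => G.Adj p.1 p.2 ∧ χ s(p.1, p.2) = c).card : ℝ) ≤
      2 * (({e : Sym2 V | e ∈ G.edgeSet ∧ χ e = c}).ncard : ℝ) := by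
  obtain ⟨S, hS⟩ : ∃ S : Finset (Sym2 V), ∀ e, e ∈ S ↔ e ∈ G.edgeSet ∧ χ e = c :=
    ⟨univ.filter fun e => e ∈ G.edgeSet ∧ χ e = c, fun e => by simp only [Finset.mem_filter, Finset.mem_univ, true_and]⟩
  have hSc : {e : Sym2 V | e ∈ G.edgeSet ∧ χ e = c} = (S : Set (Sym2 V)) := by
    ext e
    rw [Set.mem_setOf_eq, Finset.mem_coe, hS]
  rw [hSc, Set.ncard_coe_finset]
  have := Finset.card_le_mul_card_image_of_maps_to (s := univ.filter fun p : V × V => G.Adj p.1 p.2 ∧ χ s(p.1, p.2) = c)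
    (t := S) (f := fun p => s(p.1, p.2)) (by
      intro p hp
      simp only [Finset.mem_filter, Finset.mem_univ, true_and] at hp
      exact (hS _).2 hp) 2 (by
      intro e _
      induction e using Sym2.ind with
      | _ a b =>
        refine le_trans (Finset.card_le_card (t := {(a, b), (b, a)}) ?_) Finset.card_le_two
        rintro ⟨x, y⟩ hp
        simp only [Finset.mem_filter] at hp
        have := hp.2
        rw [Sym2.eq_iff] at this
        simp only [Finset.mem_insert, Finset.mem_singleton, Prod.mk.injEq]
        exact this)
  exact_mod_cast this

theorem deg_eq {V : Type*} [Fintype V] (G : SimpleGraph V) (v : V) :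
    (G.neighborSet v).ncard = (univ.filter fun w => G.Adj v w).card := by
  have : G.neighborSet v = ((univ.filter fun w => G.Adj v w : Finset V) : Set V) := by
    ext w
    simp only [SimpleGraph.mem_neighborSet, Finset.coe_filter, Finset.mem_univ, true_and, Set.mem_setOf_eq]
  rw [this, Set.ncard_coe_finset]

theorem main_aux (n k : ℕ) (hn : 10 ^ 12 ≤ n) (hk : 0 < k) {V : Type*} [Fintype V] (G : SimpleGraph V)
    (hV : Fintype.card V = n) (hdeg : ∀ v : V, (n : ℝ) / 2 ≤ ((G.neighborSet v).ncard : ℝ)) (χ : Sym2 V → ℕ)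
    (hχ : ∀ c : ℕ, (({e : Sym2 V | e ∈ G.edgeSet ∧ χ e = c}).ncard : ℝ) ≤ 1 / 10 ^ 24 * n / (k + k : ℕ)) :
    ∃ H : G.Subgraph, H.IsSpanning ∧ (∀ v : V, (H.neighborSet v).ncard = k + k) ∧
      ∀ e ∈ H.edgeSet, ∀ f ∈ H.edgeSet, χ e = χ f → e = f := by
  have hk' : (0:ℝ) < k := by exact_mod_cast hk
  have hd : ∀ v, (n : ℝ) / 2 ≤ ((univ.filter fun w => G.Adj v w).card : ℝ) := by
    intro v
    rw [← deg_eq]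
    exact hdeg v
  obtain ⟨π, h1, h2⟩ := permSys_dirac G.Adj (fun u v => χ s(u, v)) k hk n (1 / 10 ^ 24 * n / k) (by rw [hV])
    (by exact_mod_cast hn) (by positivity)
    (by
      intro cc
      refine (arcs_le G χ cc).trans ?_
      have := hχ cc
      push_cast at this
      have e : (1:ℝ) / 10 ^ 24 * n / k = 2 * (1 / 10 ^ 24 * n / (k + k)) := by
        field_simp
        norm_num
      rw [e]
      linarith)
    (by
      apply le_of_eq
      field_simp)
    hd
    (by
      intro v
      have := hd v
      simp only [G.adj_comm] at this ⊢
      convert this using 6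
      )
  exact factor_of_perms G χ k π h1 h2
end helpers

theorem rainbow_factor_in_Dirac :
    ∃ μ : ℝ, 0 < μ ∧ ∃ n₀ : ℕ, ∀ n : ℕ, n₀ ≤ n →
      ∀ Δ : ℕ, Even Δ → 1 ≤ Δ → (Δ : ℝ) ≤ μ * n →
      ∀ (V : Type) [Fintype V] (G : SimpleGraph V),
        Fintype.card V = n →
        (∀ v : V, (n : ℝ) / 2 ≤ ((G.neighborSet v).ncard : ℝ)) →
        ∀ χ : Sym2 V → ℕ,
          (∀ c : ℕ, (({e : Sym2 V | e ∈ G.edgeSet ∧ χ e = c}).ncard : ℝ) ≤ μ * n / Δ) →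
          ∃ H : G.Subgraph, H.IsSpanning ∧ (∀ v : V, (H.neighborSet v).ncard = Δ) ∧
            ∀ e ∈ H.edgeSet, ∀ f ∈ H.edgeSet, χ e = χ f → e = f := by
  refine ⟨1 / 10 ^ 24, by norm_num, 10 ^ 12, ?_⟩
  intro n hn Δ hE hΔ _ V _ G hV hdeg χ hχ
  obtain ⟨k, rfl⟩ := hE
  exact main_aux n k hn (by omega) G hV hdeg χ hχ
end

section
/- For every τ ∈ (0,1) there exists ε₀ ∈ (0,1) such that for every ε ∈ (0, ε₀] there exists ν₀ ∈ (0,1) such that for every ν ∈ (0, ν₀] there exists n₀ ∈ ℕ such that for every n ≥ n₀ the following holds: if G = (A ∪ B, E) is a Dirac bipartite graph on 2n vertices, then G is a bipartite robust (ν,τ)-expander or G is an ε-extremal graph. -/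
/-- The `ν`-robust neighbourhood of `X`: vertices with at least `ν n` neighbours in `X`. -/
def robustNbhd {V : Type*} (G : SimpleGraph V) (n : ℕ) (ν : ℝ) (X : Set V) : Set V :=
  {v : V | ν * n ≤ ((G.neighborSet v ∩ X).ncard : ℝ)}

/-- A balanced bipartite graph with parts `A`, `B` of size `n` is a bipartite robust
`(ν,τ)`-expander if every `X ⊆ A` or `X ⊆ B` with `τn ≤ |X| ≤ (1−τ)n` satisfies
`|RN_ν(X)| ≥ |X| + νn`. -/
def BipRobustExpander {V : Type*} (G : SimpleGraph V) (A B : Set V) (n : ℕ)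
    (ν τ : ℝ) : Prop :=
  ∀ X : Set V, (X ⊆ A ∨ X ⊆ B) → τ * n ≤ (X.ncard : ℝ) → (X.ncard : ℝ) ≤ (1 - τ) * n →
    (X.ncard : ℝ) + ν * n ≤ ((robustNbhd G n ν X).ncard : ℝ)

/-- A balanced bipartite graph with parts `A`, `B` of size `n` is `ε`-extremal if there are
partitions `A = A₁ ∪ A₂`, `B = B₁ ∪ B₂` with `||A₁| − |A₂|| ≤ εn`, `||B₁| − |B₂|| ≤ εn`
and `e(A₁, B₂) ≤ εn²`. -/
def EpsExtremal {V : Type*} (G : SimpleGraph V) (A B : Set V) (n : ℕ) (ε : ℝ) : Prop :=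
  ∃ A₁ A₂ B₁ B₂ : Set V,
    A₁ ∪ A₂ = A ∧ Disjoint A₁ A₂ ∧ B₁ ∪ B₂ = B ∧ Disjoint B₁ B₂ ∧
    |(A₁.ncard : ℝ) - (A₂.ncard : ℝ)| ≤ ε * n ∧
    |(B₁.ncard : ℝ) - (B₂.ncard : ℝ)| ≤ ε * n ∧
    (({p : V × V | p.1 ∈ A₁ ∧ p.2 ∈ B₂ ∧ G.Adj p.1 p.2}).ncard : ℝ) ≤ ε * n ^ 2

open Classical in
lemma pair_count {V : Type} [Fintype V] (P : V → V → Prop) :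
    ({p : V × V | P p.1 p.2}).ncard = ∑ u, ({v | P u v} : Set V).ncard := by
  simp only [Set.ncard_eq_toFinset_card', Set.toFinset_ofPred, Finset.card_filter,
    Fintype.sum_prod_type]

open Classical in
lemma pair_count_right {V : Type} [Fintype V] (P : V → V → Prop) :
    ({p : V × V | P p.1 p.2}).ncard = ∑ v, ({u | P u v} : Set V).ncard := by
  simp only [Set.ncard_eq_toFinset_card', Set.toFinset_ofPred, Finset.card_filter,
    Fintype.sum_prod_type_right]

open Classical in
lemma sum_ite_set {V : Type} [Fintype V] (S : Set V) [DecidablePred (· ∈ S)] (c : ℝ) :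
    ∑ u : V, (if u ∈ S then c else 0) = S.ncard * c := by
  rw [← Finset.sum_filter, Finset.sum_const, nsmul_eq_mul, Set.ncard_eq_toFinset_card']
  congr 3
  ext; simp

open Classical in
lemma key {V : Type} [Fintype V] (G : SimpleGraph V) (A B : Set V) (n : ℕ) (hn : 1 ≤ n)
    (hAB : A ∪ B = Set.univ) (hd : Disjoint A B) (hA : A.ncard = n) (hB : B.ncard = n)
    (hbip : ∀ u v : V, G.Adj u v → (u ∈ A ∧ v ∈ B) ∨ (u ∈ B ∧ v ∈ A))
    (hdeg : ∀ v : V, (n : ℝ) / 2 ≤ ((G.neighborSet v).ncard : ℝ))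
    (τ ε ν : ℝ) (hτ : 0 < τ) (hτ1 : τ < 1) (hε1 : ε < 1) (hν : 0 < ν)
    (hνε : ν ≤ ε * τ / 4) (X R : Set V) (hR : R = robustNbhd G n ν X) (hX : X ⊆ A)
    (h1 : τ * n ≤ (X.ncard : ℝ)) (h2 : (X.ncard : ℝ) ≤ (1 - τ) * n)
    (h3 : (R.ncard : ℝ) < X.ncard + ν * n) :
    R ⊆ B ∧ |(X.ncard : ℝ) - ((A \ X).ncard : ℝ)| ≤ ε * n ∧
    |(R.ncard : ℝ) - ((B \ R).ncard : ℝ)| ≤ ε * n ∧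
    (({p : V × V | p.1 ∈ X ∧ p.2 ∈ B \ R ∧ G.Adj p.1 p.2}).ncard : ℝ) ≤ ε * n ^ 2 := by
  have hn0 : (1 : ℝ) ≤ n := by exact_mod_cast hn
  have hnot : ∀ v, v ∈ A → v ∉ B := fun v h h' => Set.disjoint_left.1 hd h h'
  have hRB : R ⊆ B := by
    intro v hv
    by_contra hvB
    have : G.neighborSet v ∩ X = ∅ := by
      ext u
      simp only [Set.mem_inter_iff, SimpleGraph.mem_neighborSet, Set.mem_empty_iff_false,
        iff_false, not_and]
      intro ha hu
      rcases hbip v u ha with h | h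
      · exact hnot u (hX hu) h.2
      · exact hvB h.1
    rw [hR] at hv
    simp only [robustNbhd, Set.mem_ofPred_eq, this, Set.ncard_empty, Nat.cast_zero] at hv
    nlinarith
  have cA : ((A \ X).ncard : ℝ) + X.ncard = n := by
    exact_mod_cast (Set.ncard_sdiff_add_ncard_of_subset hX).trans hA
  have cB : ((B \ R).ncard : ℝ) + R.ncard = n := by
    exact_mod_cast (Set.ncard_sdiff_add_ncard_of_subset hRB).trans hB
  -- few edges
  have hE : (({p : V × V | p.1 ∈ X ∧ p.2 ∈ B \ R ∧ G.Adj p.1 p.2}).ncard : ℝ) ≤ ν * n ^ 2 := by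
    rw [pair_count_right (fun a b => a ∈ X ∧ b ∈ B \ R ∧ G.Adj a b)]
    push_cast
    calc _ ≤ ∑ v : V, (if v ∈ B \ R then ν * (n : ℝ) else 0) := by
          apply Finset.sum_le_sum
          intro v _
          split_ifs with hv
          · have h : ¬ (ν * n ≤ ((G.neighborSet v ∩ X).ncard : ℝ)) := by
              intro h
              apply hv.2
              rw [hR]
              exact h
            push Not at h
            have e : ({u | u ∈ X ∧ v ∈ B \ R ∧ G.Adj u v} : Set V) ⊆ G.neighborSet v ∩ X := by
              intro u hu
              exact ⟨hu.2.2.symm, hu.1⟩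
            have := Set.ncard_le_ncard e
            have : (({u | u ∈ X ∧ v ∈ B \ R ∧ G.Adj u v} : Set V).ncard : ℝ) ≤
              (G.neighborSet v ∩ X).ncard := by exact_mod_cast this
            linarith
          · simp [hv]
      _ = (B \ R).ncard * (ν * n) := sum_ite_set _ _
      _ ≤ n * (ν * n) := by
          have : (0 : ℝ) ≤ R.ncard := by positivity
          have : 0 < ν * n := by positivity
          have h : ((B \ R).ncard : ℝ) ≤ n := by linarith
          exact mul_le_mul_of_nonneg_right h this.le
      _ = ν * n ^ 2 := by ring
  have hlow : (X.ncard : ℝ) * (n / 2 - R.ncard) ≤ ν * n ^ 2 := by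
    refine le_trans ?_ hE
    rw [pair_count (fun a b => a ∈ X ∧ b ∈ B \ R ∧ G.Adj a b), ← sum_ite_set]
    push_cast
    apply Finset.sum_le_sum
    intro u _
    split_ifs with hu
    · have e : G.neighborSet u ⊆ R ∪ {v | u ∈ X ∧ v ∈ B \ R ∧ G.Adj u v} := by
        intro v hv
        by_cases hvR : v ∈ R
        · exact Or.inl hvR
        · right
          rcases hbip u v hv with h | h
          · exact ⟨hu, ⟨h.2, hvR⟩, hv⟩
          · exact absurd h.1 (hnot u (hX hu))
      have := (Set.ncard_le_ncard e).trans (Set.ncard_union_le _ _)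
      have : ((G.neighborSet u).ncard : ℝ) ≤ R.ncard +
        ({v | u ∈ X ∧ v ∈ B \ R ∧ G.Adj u v} : Set V).ncard := by exact_mod_cast this
      linarith [hdeg u]
    · positivity
  have hετ : ν ≤ τ := by nlinarith
  have hνε' : ν ≤ ε / 4 := by nlinarith
  have hup : (X.ncard : ℝ) < n / 2 + ν * n := by
    by_contra hc
    push Not at hc
    have : B ⊆ R := by
      intro v hv
      rw [hR]
      change ν * n ≤ ((G.neighborSet v ∩ X).ncard : ℝ)
      have e : G.neighborSet v ⊆ (G.neighborSet v ∩ X) ∪ (A \ X) := by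
        intro u hu
        by_cases huX : u ∈ X
        · exact Or.inl ⟨hu, huX⟩
        · right
          rcases hbip v u hu with h | h
          · exact absurd hv (hnot v h.1)
          · exact ⟨h.2, huX⟩
      have := (Set.ncard_le_ncard e).trans (Set.ncard_union_le _ _)
      have : ((G.neighborSet v).ncard : ℝ) ≤ (G.neighborSet v ∩ X).ncard +
        (A \ X).ncard := by exact_mod_cast this
      linarith [hdeg v]
    have := Set.ncard_le_ncard this
    have : (n : ℝ) ≤ R.ncard := by rw [← hB]; exact_mod_cast this
    nlinarith
  have hRlow : (n : ℝ) / 2 - R.ncard ≤ ε / 4 * n := by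
    by_contra hc
    push Not at hc
    have hεp : 0 < ε / 4 := by linarith
    have a1 : (τ * n) * (ε / 4 * n) < X.ncard * (n / 2 - R.ncard) := by
      have : 0 < ε / 4 * n := by positivity
      have : 0 < τ * n := by positivity
      nlinarith
    have a2 : ν * n ^ 2 ≤ (ε * τ / 4) * n ^ 2 := by gcongr
    nlinarith
  have hνn : ν * n ≤ ε / 4 * n := by gcongr
  refine ⟨hRB, ?_, ?_, hE.trans ?_⟩
  · rw [abs_le]; constructor <;> linarith
  · rw [abs_le]; constructor <;> linarith
  · have : ν ≤ ε := by linarith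
    gcongr

/-- dichotomy for Dirac bipartite graphs: every Dirac bipartite graph on
2n vertices is a bipartite robust (ν,τ)-expander or an ε-extremal graph. -/
theorem dirac_bipartite_dichotomy :
    ∀ τ : ℝ, τ ∈ Set.Ioo (0 : ℝ) 1 →
    ∃ ε₀ ∈ Set.Ioo (0 : ℝ) 1, ∀ ε ∈ Set.Ioc (0 : ℝ) ε₀,
    ∃ ν₀ ∈ Set.Ioo (0 : ℝ) 1, ∀ ν ∈ Set.Ioc (0 : ℝ) ν₀,
    ∃ n₀ : ℕ, ∀ n : ℕ, n₀ ≤ n →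
      ∀ (V : Type) [Fintype V] (G : SimpleGraph V) (A B : Set V),
        A ∪ B = Set.univ → Disjoint A B → A.ncard = n → B.ncard = n →
        (∀ u v : V, G.Adj u v → (u ∈ A ∧ v ∈ B) ∨ (u ∈ B ∧ v ∈ A)) →
        (∀ v : V, (n : ℝ) / 2 ≤ ((G.neighborSet v).ncard : ℝ)) →
        BipRobustExpander G A B n ν τ ∨ EpsExtremal G A B n ε := by
  intro τ ⟨hτ, hτ1⟩
  refine ⟨1 / 2, ⟨by norm_num, by norm_num⟩, ?_⟩
  rintro ε ⟨hε, hε2⟩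
  have hp : 0 < ε * τ := by positivity
  have hp1 : ε * τ < 1 := by nlinarith
  refine ⟨ε * τ / 4, ⟨by linarith, by linarith⟩, ?_⟩
  rintro ν ⟨hν, hνε⟩
  refine ⟨1, ?_⟩
  intro n hn V _ G A B hAB hd hA hB hbip hdeg
  by_cases hex : BipRobustExpander G A B n ν τ
  · exact Or.inl hex
  right
  unfold BipRobustExpander at hex
  push Not at hex
  obtain ⟨X, hX, h1, h2, h3⟩ := hex
  rcases hX with hX | hX
  · obtain ⟨r1, r2, r3, r4⟩ := key G A B n hn hAB hd hA hB hbip hdeg τ ε ν hτ hτ1 (by linarith)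
      hν hνε X _ rfl hX h1 h2 h3
    exact ⟨X, A \ X, robustNbhd G n ν X, B \ robustNbhd G n ν X, Set.union_sdiff_cancel hX,
      Set.disjoint_sdiff_right, Set.union_sdiff_cancel r1, Set.disjoint_sdiff_right, r2, r3, r4⟩
  · obtain ⟨r1, r2, r3, r4⟩ := key G B A n hn (by rw [Set.union_comm]; exact hAB) hd.symm hB hA
      (fun u v h => (hbip u v h).symm) hdeg τ ε ν hτ hτ1 (by linarith)
      hν hνε X _ rfl hX h1 h2 h3
    refine ⟨A \ robustNbhd G n ν X, robustNbhd G n ν X, B \ X, X, Set.sdiff_union_of_subset r1,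
      Set.disjoint_sdiff_left, Set.sdiff_union_of_subset hX, Set.disjoint_sdiff_left,
      by rw [abs_sub_comm]; exact r3, by rw [abs_sub_comm]; exact r2, ?_⟩
    refine le_trans ?_ r4
    rw [pair_count (fun a b => a ∈ A \ robustNbhd G n ν X ∧ b ∈ X ∧ G.Adj a b),
      pair_count_right (fun a b => a ∈ X ∧ b ∈ A \ robustNbhd G n ν X ∧ G.Adj a b)]
    apply le_of_eq
    congr 1
    apply Finset.sum_congr rfl
    intro u _
    congr 1
    ext v
    simp only [Set.mem_ofPred_eq, G.adj_comm u v]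
    tauto
end
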